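/- arXiv:2309.00963 — 2 statements merged into one kernel-verified Lean document; each statement's English description precedes it below -/
import Mathlib

section
/- Let I = [a,b] be a finite interval and let V : ℝ → ℝ be a continuous bounded function with V ≥ 1. Then there exists a C² positive solution φ of the ODE −φ''(x) + V(x)φ(x) = 0 on I satisfying 1 ≤ φ(x) ≤ e^{(b−a)² ‖V‖_{L^∞(ℝ)}} for all x ∈ I. -/
open MeasureTheory Set

/-!
With `D g x = ∫ₐˣ ∫ₐˢ g`, the problem `φ'' = V φ`, `φ a = 1`, `φ' a = 0` is the fixed point
equation `φ = 1 + D (V φ)`. For `V ≥ 0` its right-hand side is monotone in `φ`, on both sides of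
`a`, so the iteration started at `1` increases. It stays below every supersolution, and
`ψ = exp (D V)` is one because `ψ'' = (V + (∫ₐ V)²) ψ ≥ V ψ`. Hence the iterates converge to a
solution `φ` with `1 ≤ φ ≤ exp (D V)`, and `D V x ≤ M (x - a)² / 2` when `V ≤ M`.
-/

open Filter Topology intervalIntegral

section DoublePrimitive

variable {a : ℝ} {f g : ℝ → ℝ}

/-- The double primitive of `g` based at `a`: the function with second derivative `g` (when `g` is
continuous) that vanishes at `a` together with its derivative. It turns the Cauchy problem at `a`
for a second-order equation into an integral equation. -/
noncomputable def doublePrimitive (a : ℝ) (g : ℝ → ℝ) (x : ℝ) : ℝ :=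
  ∫ s in a..x, ∫ t in a..s, g t

theorem doublePrimitive_self (a : ℝ) (g : ℝ → ℝ) : doublePrimitive a g a = 0 :=
  integral_same

theorem continuous_doublePrimitive (hg : ∀ u v, IntervalIntegrable g volume u v) :
    Continuous (doublePrimitive a g) :=
  continuous_primitive (fun u v ↦ (continuous_primitive hg a).intervalIntegrable u v) a

theorem hasDerivAt_doublePrimitive (hg : Continuous g) (x : ℝ) :
    HasDerivAt (doublePrimitive a g) (∫ t in a..x, g t) x :=
  ((continuous_primitive hg.intervalIntegrable a).integral_hasStrictDerivAt a x).hasDerivAt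

theorem deriv_doublePrimitive (hg : Continuous g) :
    deriv (doublePrimitive a g) = fun x ↦ ∫ t in a..x, g t :=
  funext fun x ↦ (hasDerivAt_doublePrimitive hg x).deriv

theorem deriv_deriv_doublePrimitive (hg : Continuous g) :
    deriv (deriv (doublePrimitive a g)) = g := by
  rw [deriv_doublePrimitive hg]
  exact funext (Continuous.deriv_integral g hg a)

theorem contDiff_two_doublePrimitive (hg : Continuous g) :
    ContDiff ℝ 2 (doublePrimitive a g) := by
  have hderiv : ContDiff ℝ 1 (deriv (doublePrimitive a g)) := by
    refine contDiff_one_iff_deriv.2 ⟨?_, by rwa [deriv_deriv_doublePrimitive hg]⟩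
    rw [deriv_doublePrimitive hg]
    exact fun x ↦ (hg.integral_hasStrictDerivAt a x).hasDerivAt.differentiableAt
  rw [← one_add_one_eq_two, contDiff_succ_iff_deriv]
  exact ⟨fun x ↦ (hasDerivAt_doublePrimitive hg x).differentiableAt, by simp, hderiv⟩

theorem doublePrimitive_eq_of_hasDerivAt {F F' : ℝ → ℝ} (hF : ∀ x, HasDerivAt F (F' x) x)
    (hF' : ∀ x, HasDerivAt F' (g x) x) (hg : Continuous g) (x : ℝ) :
    doublePrimitive a g x = F x - F a - (x - a) * F' a := by
  have hinner (s : ℝ) : ∫ t in a..s, g t = F' s - F' a :=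
    integral_eq_sub_of_hasDerivAt (fun t _ ↦ hF' t) (hg.intervalIntegrable a s)
  have hF'cont : Continuous F' := continuous_iff_continuousAt.2 fun t ↦ (hF' t).continuousAt
  have houter : ∫ s in a..x, F' s = F x - F a :=
    integral_eq_sub_of_hasDerivAt (fun t _ ↦ hF t) (hF'cont.intervalIntegrable a x)
  simp only [doublePrimitive, hinner]
  rw [integral_sub (hF'cont.intervalIntegrable a x) intervalIntegrable_const, houter,
    intervalIntegral.integral_const, smul_eq_mul]

theorem doublePrimitive_const (a c x : ℝ) :
    doublePrimitive a (fun _ ↦ c) x = c * (x - a) ^ 2 / 2 := by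
  simp only [doublePrimitive, intervalIntegral.integral_const, smul_eq_mul,
    intervalIntegral.integral_mul_const, integral_comp_sub_right (fun s ↦ s) a, integral_id]
  ring

theorem doublePrimitive_sub (hf : ∀ u v, IntervalIntegrable f volume u v)
    (hg : ∀ u v, IntervalIntegrable g volume u v) (x : ℝ) :
    doublePrimitive a (f - g) x = doublePrimitive a f x - doublePrimitive a g x := by
  simp only [doublePrimitive, Pi.sub_apply, integral_sub (hf _ _) (hg _ _)]
  exact integral_sub ((continuous_primitive hf a).intervalIntegrable a x)
    ((continuous_primitive hg a).intervalIntegrable a x)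

theorem doublePrimitive_nonneg (hg : 0 ≤ g) (x : ℝ) : 0 ≤ doublePrimitive a g x := by
  rcases le_total a x with hax | hxa
  · exact integral_nonneg hax fun s hs ↦ integral_nonneg hs.1 fun t _ ↦ hg t
  · -- Left of `a` both integrals are taken backwards, and the two signs cancel.
    rw [doublePrimitive, integral_symm, ← intervalIntegral.integral_neg]
    refine integral_nonneg hxa fun s hs ↦ ?_
    rw [← integral_symm]
    exact integral_nonneg hs.2 fun t _ ↦ hg t

theorem doublePrimitive_mono (hf : ∀ u v, IntervalIntegrable f volume u v)
    (hg : ∀ u v, IntervalIntegrable g volume u v) (hfg : f ≤ g) (x : ℝ) :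
    doublePrimitive a f x ≤ doublePrimitive a g x := by
  rw [← sub_nonneg, ← doublePrimitive_sub hg hf]
  exact doublePrimitive_nonneg (sub_nonneg.2 hfg) x

theorem doublePrimitive_le_of_le {c : ℝ} (hg : ∀ u v, IntervalIntegrable g volume u v)
    (hgc : ∀ x, g x ≤ c) (x : ℝ) : doublePrimitive a g x ≤ c * (x - a) ^ 2 / 2 :=
  (doublePrimitive_mono hg (fun _ _ ↦ intervalIntegrable_const) hgc x).trans_eq
    (doublePrimitive_const a c x)

theorem doublePrimitive_le_sq_mul {b c x : ℝ} (hg : ∀ u v, IntervalIntegrable g volume u v)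
    (hc : 0 ≤ c) (hgc : ∀ t, g t ≤ c) (hx : x ∈ Icc a b) :
    doublePrimitive a g x ≤ (b - a) ^ 2 * c :=
  calc doublePrimitive a g x ≤ c * (x - a) ^ 2 / 2 := doublePrimitive_le_of_le hg hgc x
    _ ≤ c * (x - a) ^ 2 := half_le_self (by positivity)
    _ ≤ c * (b - a) ^ 2 := by gcongr <;> linarith [hx.1, hx.2]
    _ = (b - a) ^ 2 * c := mul_comm _ _

theorem tendsto_doublePrimitive_of_dominated {F : ℕ → ℝ → ℝ}
    (hF : ∀ n, AEStronglyMeasurable (F n)) (hg : ∀ u v, IntervalIntegrable g volume u v)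
    (hFg : ∀ n x, ‖F n x‖ ≤ g x) (hlim : ∀ x, Tendsto (F · x) atTop (𝓝 (f x))) (x : ℝ) :
    Tendsto (fun n ↦ doublePrimitive a (F n) x) atTop (𝓝 (doublePrimitive a f x)) := by
  have hFint (n : ℕ) (u v : ℝ) : IntervalIntegrable (F n) volume u v :=
    (hg u v).mono_fun' (hF n).restrict (ae_of_all _ (hFg n))
  have hinner (s : ℝ) : Tendsto (fun n ↦ ∫ t in a..s, F n t) atTop (𝓝 (∫ t in a..s, f t)) :=
    tendsto_integral_filter_of_dominated_convergence g (.of_forall fun n ↦ (hF n).restrict)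
      (.of_forall fun n ↦ ae_of_all _ fun t _ ↦ hFg n t) (hg a s) (ae_of_all _ fun t _ ↦ hlim t)
  have hinner_bound (n : ℕ) (s : ℝ) : ‖∫ t in a..s, F n t‖ ≤ |∫ t in a..s, g t| :=
    norm_integral_le_abs_of_norm_le (ae_of_all _ (hFg n)) (hg a s)
  exact tendsto_integral_filter_of_dominated_convergence (fun s ↦ |∫ t in a..s, g t|)
    (.of_forall fun n ↦ (continuous_primitive (hFint n) a).aestronglyMeasurable)
    (.of_forall fun n ↦ ae_of_all _ fun s _ ↦ hinner_bound n s)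
    ((continuous_primitive hg a).abs.intervalIntegrable a x)
    (ae_of_all _ fun s _ ↦ hinner s)

end DoublePrimitive

/-- The successive approximations, started at `h`, of the Volterra equation
`φ = h + doublePrimitive a (V * φ)`. -/
noncomputable def volterraIterate (a : ℝ) (V h : ℝ → ℝ) : ℕ → ℝ → ℝ
  | 0 => h
  | n + 1 => h + doublePrimitive a (V * volterraIterate a V h n)

section Volterra

variable {a : ℝ} {V f g h ψ : ℝ → ℝ}

theorem continuous_volterraIterate (hV : Continuous V) (hh : Continuous h) (n : ℕ) :
    Continuous (volterraIterate a V h n) := by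
  induction n with
  | zero => exact hh
  | succ n ih => exact hh.add (continuous_doublePrimitive (hV.mul ih).intervalIntegrable)

theorem doublePrimitive_mul_mono (hV : Continuous V) (hV0 : 0 ≤ V) (hf : Continuous f)
    (hg : Continuous g) (hfg : f ≤ g) : doublePrimitive a (V * f) ≤ doublePrimitive a (V * g) :=
  doublePrimitive_mono (hV.mul hf).intervalIntegrable (hV.mul hg).intervalIntegrable
    (mul_le_mul_of_nonneg_left hfg hV0)

theorem monotone_volterraIterate (hV : Continuous V) (hV0 : 0 ≤ V) (hh : Continuous h)
    (hh0 : 0 ≤ h) : Monotone (volterraIterate a V h) := by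
  refine monotone_nat_of_le_succ fun n ↦ ?_
  induction n with
  | zero => exact le_add_of_nonneg_right (doublePrimitive_nonneg (mul_nonneg hV0 hh0))
  | succ n ih =>
    exact add_le_add_right (doublePrimitive_mul_mono hV hV0 (continuous_volterraIterate hV hh n)
      (continuous_volterraIterate hV hh (n + 1)) ih) h

theorem volterraIterate_le_of_supersolution (hV : Continuous V) (hV0 : 0 ≤ V) (hh : Continuous h)
    (hψ : Continuous ψ) (hhψ : h ≤ ψ) (hsuper : h + doublePrimitive a (V * ψ) ≤ ψ) (n : ℕ) :
    volterraIterate a V h n ≤ ψ := by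
  induction n with
  | zero => exact hhψ
  | succ n ih =>
    exact (add_le_add_right (doublePrimitive_mul_mono hV hV0
      (continuous_volterraIterate hV hh n) hψ ih) h).trans hsuper

theorem exists_continuous_eq_add_doublePrimitive (hV : Continuous V) (hV0 : 0 ≤ V)
    (hh : Continuous h) (hh0 : 0 ≤ h) (hψ : Continuous ψ) (hhψ : h ≤ ψ)
    (hsuper : h + doublePrimitive a (V * ψ) ≤ ψ) :
    ∃ φ, Continuous φ ∧ φ = h + doublePrimitive a (V * φ) ∧ h ≤ φ ∧ φ ≤ ψ := by
  set u := volterraIterate a V h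
  have hucont : ∀ n, Continuous (u n) := continuous_volterraIterate hV hh
  have humono : Monotone u := monotone_volterraIterate hV hV0 hh hh0
  have hhu (n : ℕ) : h ≤ u n := humono n.zero_le
  have huψ : ∀ n, u n ≤ ψ := volterraIterate_le_of_supersolution hV hV0 hh hψ hhψ hsuper
  have hbdd (x : ℝ) : BddAbove (range (u · x)) := ⟨ψ x, forall_mem_range.2 fun n ↦ huψ n x⟩
  set φ : ℝ → ℝ := fun x ↦ ⨆ n, u n x
  have hlim (x : ℝ) : Tendsto (u · x) atTop (𝓝 (φ x)) :=
    tendsto_atTop_ciSup (fun _ _ hmn ↦ humono hmn x) (hbdd x)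
  have hhφ : h ≤ φ := fun x ↦ le_ciSup (hbdd x) 0
  have hφψ : φ ≤ ψ := fun x ↦ ciSup_le fun n ↦ huψ n x
  have hdom {w : ℝ → ℝ} (hhw : h ≤ w) (hwψ : w ≤ ψ) (x : ℝ) : ‖(V * w) x‖ ≤ (V * ψ) x := by
    have hVw : 0 ≤ (V * w) x := mul_nonneg (hV0 x) ((hh0 x).trans (hhw x))
    rw [Real.norm_of_nonneg hVw]
    exact mul_le_mul_of_nonneg_left (hwψ x) (hV0 x)
  have hφmeas : Measurable φ :=
    measurable_of_tendsto_metrizable (fun n ↦ (hucont n).measurable) (tendsto_pi_nhds.2 hlim)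
  have hVφint (s t : ℝ) : IntervalIntegrable (V * φ) volume s t :=
    ((hV.mul hψ).intervalIntegrable s t).mono_fun' (hV.measurable.mul hφmeas).aestronglyMeasurable
      (ae_of_all _ (hdom hhφ hφψ))
  have hfix : φ = h + doublePrimitive a (V * φ) := funext fun x ↦
    tendsto_nhds_unique ((hlim x).comp (tendsto_add_atTop_nat 1)) <|
      (tendsto_doublePrimitive_of_dominated (fun n ↦ (hV.mul (hucont n)).aestronglyMeasurable)
        (hV.mul hψ).intervalIntegrable (fun n ↦ hdom (hhu n) (huψ n))
        (fun t ↦ (hlim t).const_mul (V t)) x).const_add (h x)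
  refine ⟨φ, ?_, hfix, hhφ, hφψ⟩
  rw [hfix]
  exact hh.add (continuous_doublePrimitive hVφint)

theorem one_add_doublePrimitive_mul_exp_le (hV : Continuous V) (x : ℝ) :
    1 + doublePrimitive a (V * fun t ↦ Real.exp (doublePrimitive a V t)) x ≤
      Real.exp (doublePrimitive a V x) := by
  set W : ℝ → ℝ := fun t ↦ ∫ s in a..t, V s
  set ψ : ℝ → ℝ := fun t ↦ Real.exp (doublePrimitive a V t)
  have hWcont : Continuous W := continuous_primitive hV.intervalIntegrable a
  have hψcont : Continuous ψ :=
    Real.continuous_exp.comp (continuous_doublePrimitive hV.intervalIntegrable)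
  have hψderiv (t : ℝ) : HasDerivAt ψ (ψ t * W t) t := (hasDerivAt_doublePrimitive hV t).exp
  have hψderiv₂ (t : ℝ) : HasDerivAt (fun t ↦ ψ t * W t) (ψ t * W t * W t + ψ t * V t) t :=
    (hψderiv t).mul (hV.integral_hasStrictDerivAt a t).hasDerivAt
  have hcont₂ : Continuous fun t ↦ ψ t * W t * W t + ψ t * V t := by fun_prop
  have hle : V * ψ ≤ fun t ↦ ψ t * W t * W t + ψ t * V t := fun t ↦
    calc V t * ψ t = ψ t * V t := mul_comm _ _
      _ ≤ ψ t * (W t * W t) + ψ t * V t :=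
        le_add_of_nonneg_left (mul_nonneg (Real.exp_pos _).le (mul_self_nonneg _))
      _ = ψ t * W t * W t + ψ t * V t := by rw [mul_assoc]
  have hψa : ψ a = 1 := by simp only [ψ, doublePrimitive_self, Real.exp_zero]
  have hWa : W a = 0 := integral_same
  calc 1 + doublePrimitive a (V * ψ) x
      ≤ 1 + doublePrimitive a (fun t ↦ ψ t * W t * W t + ψ t * V t) x := by
        gcongr
        exact doublePrimitive_mono (hV.mul hψcont).intervalIntegrable hcont₂.intervalIntegrable
          hle x
    _ = ψ x := by
        rw [doublePrimitive_eq_of_hasDerivAt hψderiv hψderiv₂ hcont₂, hψa, hWa]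
        ring

end Volterra

theorem ode_positive_solution_bounds_general (a : ℝ) (V : ℝ → ℝ) (hV : Continuous V)
    (hV0 : ∀ x, 0 ≤ V x) :
    ∃ φ : ℝ → ℝ, ContDiff ℝ 2 φ ∧ (∀ x, -(deriv (deriv φ) x) + V x * φ x = 0) ∧
      ∀ x, 1 ≤ φ x ∧ φ x ≤ Real.exp (∫ s in a..x, ∫ t in a..s, V t) := by
  obtain ⟨φ, hφcont, hfix, hlower, hupper⟩ :=
    exists_continuous_eq_add_doublePrimitive (a := a) hV hV0 continuous_one zero_le_one
      (Real.continuous_exp.comp (continuous_doublePrimitive hV.intervalIntegrable))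
      (fun x ↦ Real.one_le_exp (doublePrimitive_nonneg hV0 x))
      (one_add_doublePrimitive_mul_exp_le hV)
  have hVφ : Continuous (V * φ) := hV.mul hφcont
  have hderiv₂ : deriv (deriv φ) = V * φ :=
    calc deriv (deriv φ) = deriv (deriv (1 + doublePrimitive a (V * φ))) := by rw [← hfix]
      _ = deriv (deriv (doublePrimitive a (V * φ))) := congrArg deriv (deriv_const_add' 1)
      _ = V * φ := deriv_deriv_doublePrimitive hVφ
  refine ⟨φ, ?_, fun x ↦ ?_, fun x ↦ ⟨hlower x, hupper x⟩⟩
  · rw [hfix]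
    exact contDiff_const.add (contDiff_two_doublePrimitive hVφ)
  · rw [hderiv₂, Pi.mul_apply, neg_add_cancel]

/-- **Existence of a positive bounded solution of `-φ'' + Vφ = 0`.**
If `V` is continuous, bounded by `M`, and `V ≥ 1`, then on any finite interval `[a,b]`
there is a `C²` positive solution `φ` of `-φ'' + Vφ = 0` with
`1 ≤ φ(x) ≤ exp ((b-a)² ‖V‖_∞)` on `[a,b]`. -/
theorem ode_positive_solution_bounds
    (a b : ℝ) (hab : a < b) (V : ℝ → ℝ) (M : ℝ)
    (hVcont : Continuous V) (hVbdd : ∀ x : ℝ, |V x| ≤ M) (hV1 : ∀ x : ℝ, 1 ≤ V x) :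
    ∃ φ : ℝ → ℝ, ContDiff ℝ 2 φ ∧
      (∀ x ∈ Icc a b, -(deriv (deriv φ) x) + V x * φ x = 0) ∧
      (∀ x ∈ Icc a b, 1 ≤ φ x ∧ φ x ≤ Real.exp ((b - a) ^ 2 * M)) := by
  obtain ⟨φ, hφ, hode, hbounds⟩ :=
    ode_positive_solution_bounds_general a V hVcont fun x ↦ zero_le_one.trans (hV1 x)
  have hM : 0 ≤ M := (abs_nonneg _).trans (hVbdd a)
  have hVM (x : ℝ) : V x ≤ M := le_of_abs_le (hVbdd x)
  exact ⟨φ, hφ, fun x _ ↦ hode x, fun x hx ↦ ⟨(hbounds x).1, (hbounds x).2.trans <|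
    Real.exp_le_exp.2 (doublePrimitive_le_sq_mul hVcont.intervalIntegrable hM hVM hx)⟩⟩
end

section
/- Let ℓ ∈ ℤ, let V : ℝ → ℝ be a continuous bounded function with V ≥ 1, and let ω ⊂ [ℓ, ℓ+1] be a measurable set with |ω| > 0. Then there exist constants α ∈ (0,1) and C > 0, depending only on V and |ω|, such that every real-valued H²_loc solution φ of the 2D elliptic equation −Δφ(x,y) + V(x)φ(x,y) = 0 with Neumann condition ∂_yφ(x,0) = 0 satisfies sup_{D₁ℓ}|φ| ≤ C (sup_{ω×{0}} |φ|)^α (sup_{D₂ℓ}|φ|)^{1−α}, where D₁ℓ = [ℓ, ℓ+1] × [−1/2, 1/2] and D₂ℓ = [ℓ−1, ℓ+2] × [−3/2, 3/2]. -/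
open MeasureTheory Set

/-!
Let `u > 0` solve `u'' = V u` on an interval and put `p = u' / u`. For a solution `φ`, the vector
field `u² ∇(φ / u)` is divergence free; if `u ψ` is its stream function vanishing on `{y = 0}`, then
`f = φ + i ψ` satisfies `∂̄f = p · conj f`, and `f = φ` on the line because of the Neumann
condition. Hence `|∂̄f| ≤ C |f|`, and the similarity principle gives `f ≈ eˢ h` with `s` bounded and
`h` holomorphic; the error, which is arbitrarily small, comes from regularising `∂̄f / f` at the
zeros of `f`.

For a holomorphic `h` bounded by `B` on the unit disc and by `δ` on `ω`, choose `n + 1` points of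
`ω` at mutual distances at least `c |ω| / n`. The Lagrange interpolant of `h` at these points is at
most `Aⁿ δ`, and the remainder at most `qⁿ B` with `q < 1`, by division by the Blaschke product of
the nodes. Choosing `n` so that `Aⁿ δ` and `qⁿ B` balance gives the interpolation inequality.
-/

namespace NeumannPropagation

open Complex (I)
open Metric
open scoped ComplexConjugate

/-! ### The Cauchy–Riemann operator -/

/-- The Cauchy–Riemann operator `∂ₓ + i ∂_y`, that is `2 ∂/∂z̄`. -/
noncomputable def dbar (f : ℂ → ℂ) (z : ℂ) : ℂ :=
  fderiv ℝ f z 1 + I * fderiv ℝ f z I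

section dbar

variable {f g : ℂ → ℂ} {z : ℂ}

lemma dbar_mul (hf : DifferentiableAt ℝ f z) (hg : DifferentiableAt ℝ g z) :
    dbar (fun w ↦ f w * g w) z = dbar f z * g z + f z * dbar g z := by
  simp only [dbar, fderiv_fun_mul hf hg, add_apply, smul_apply, smul_eq_mul]
  ring

lemma dbar_const_mul (c : ℂ) (hf : DifferentiableAt ℝ f z) :
    dbar (fun w ↦ c * f w) z = c * dbar f z := by
  rw [dbar_mul (differentiableAt_const c) hf]
  simp [dbar]

lemma dbar_sub (hf : DifferentiableAt ℝ f z) (hg : DifferentiableAt ℝ g z) :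
    dbar (fun w ↦ f w - g w) z = dbar f z - dbar g z := by
  simp only [dbar, fderiv_fun_sub hf hg, sub_apply]
  ring

lemma dbar_exp_neg (hf : DifferentiableAt ℝ f z) :
    dbar (fun w ↦ Complex.exp (-f w)) z = -(Complex.exp (-f z) * dbar f z) := by
  have h : HasFDerivAt (fun w ↦ Complex.exp (-f w)) (Complex.exp (-f z) • -fderiv ℝ f z) z :=
    hf.hasFDerivAt.fun_neg.cexp
  simp only [dbar, h.fderiv, smul_apply, neg_apply, smul_eq_mul]
  ring

lemma dbar_comp_const_sub {c : ℂ} (hf : DifferentiableAt ℝ f (c - z)) :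
    dbar (fun w ↦ f (c - w)) z = -dbar f (c - z) := by
  have h : HasFDerivAt (fun w ↦ f (c - w)) (-fderiv ℝ f (c - z)) z := by
    simpa [Function.comp_def] using hf.hasFDerivAt.comp z ((hasFDerivAt_id z).const_sub c)
  simp only [dbar, h.fderiv, neg_apply]
  ring

lemma differentiableAt_of_dbar_eq_zero (hf : DifferentiableAt ℝ f z) (h : dbar f z = 0) :
    DifferentiableAt ℂ f z := by
  refine differentiableAt_complex_iff_differentiableAt_real.2 ⟨hf, ?_⟩
  rw [dbar] at h
  rw [smul_eq_mul]
  linear_combination (-I) * h + fderiv ℝ f z I * Complex.I_mul_I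

lemma dbar_eq_rotate (f : ℂ → ℂ) (z : ℂ) {u : ℂ} (hu : ‖u‖ = 1) :
    dbar f z = u * (fderiv ℝ f z u + I * fderiv ℝ f z (I * u)) := by
  have expand (w : ℂ) : fderiv ℝ f z w = w.re * fderiv ℝ f z 1 + w.im * fderiv ℝ f z I := by
    conv_lhs => rw [show w = w.re • (1 : ℂ) + w.im • I by simp [Complex.re_add_im]]
    rw [map_add, map_smul, map_smul, Complex.real_smul, Complex.real_smul]
  have hu' : (u.re : ℂ) ^ 2 + (u.im : ℂ) ^ 2 = 1 := by
    have h := Complex.sq_norm u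
    rw [hu, Complex.normSq_apply] at h
    exact_mod_cast show u.re ^ 2 + u.im ^ 2 = 1 by linarith
  rw [expand u, expand (I * u), dbar]
  simp only [Complex.mul_re, Complex.mul_im, Complex.I_re, Complex.I_im, zero_mul, one_mul,
    zero_sub, zero_add, Complex.ofReal_neg]
  conv_rhs => rw [← Complex.re_add_im u]
  simp only [Complex.add_re, Complex.add_im, Complex.mul_re, Complex.mul_im, Complex.ofReal_re,
    Complex.ofReal_im, Complex.I_re, Complex.I_im, mul_zero, mul_one, zero_add, add_zero,
    sub_zero]
  linear_combination (-(fderiv ℝ f z 1) - I * fderiv ℝ f z I) * hu' +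
    ((u.im : ℂ) ^ 2 * fderiv ℝ f z 1 - u.re * u.im * fderiv ℝ f z I) * Complex.I_mul_I

end dbar

/-! ### The Cauchy–Pompeiu formula -/

section Pompeiu

variable {h : ℂ → ℂ}

/-- The derivative of `h` in the radial direction at the point with polar coordinates `p`. -/
noncomputable def radialDeriv (h : ℂ → ℂ) (p : ℝ × ℝ) : ℂ :=
  fderiv ℝ h (circleMap 0 p.1 p.2) (circleMap 0 1 p.2)

/-- The derivative of `h` in the direction orthogonal to the radial one, at the point with polar
coordinates `p`. -/
noncomputable def angularDeriv (h : ℂ → ℂ) (p : ℝ × ℝ) : ℂ :=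
  fderiv ℝ h (circleMap 0 p.1 p.2) (I * circleMap 0 1 p.2)

lemma circleMap_zero_eq_mul (r θ : ℝ) : circleMap 0 r θ = r * circleMap 0 1 θ := by
  simp [circleMap_zero]

lemma continuous_circleMap_zero_uncurry :
    Continuous fun p : ℝ × ℝ ↦ circleMap 0 p.1 p.2 := by
  simp only [circleMap_zero]
  fun_prop

lemma continuous_radialDeriv (hh : ContDiff ℝ 1 h) : Continuous (radialDeriv h) :=
  ((hh.continuous_fderiv one_ne_zero).comp continuous_circleMap_zero_uncurry).clm_apply
    ((continuous_circleMap 0 1).comp continuous_snd)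

lemma continuous_angularDeriv (hh : ContDiff ℝ 1 h) : Continuous (angularDeriv h) :=
  ((hh.continuous_fderiv one_ne_zero).comp continuous_circleMap_zero_uncurry).clm_apply
    (continuous_const.mul ((continuous_circleMap 0 1).comp continuous_snd))

lemma hasDerivAt_comp_circleMap_radius (hh : Differentiable ℝ h) (r θ : ℝ) :
    HasDerivAt (fun r' ↦ h (circleMap 0 r' θ)) (radialDeriv h (r, θ)) r := by
  have hc : HasDerivAt (fun r' : ℝ ↦ circleMap 0 r' θ) (circleMap 0 1 θ) r := by
    simpa [circleMap_zero] using
      (Complex.ofRealCLM.hasDerivAt (x := r)).mul_const (Complex.exp (θ * I))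
  exact (hh _).hasFDerivAt.comp_hasDerivAt r hc

lemma hasDerivAt_comp_circleMap_angle (hh : Differentiable ℝ h) (r θ : ℝ) :
    HasDerivAt (fun θ' ↦ h (circleMap 0 r θ')) (r * angularDeriv h (r, θ)) θ := by
  refine ((hh _).hasFDerivAt.comp_hasDerivAt θ (hasDerivAt_circleMap 0 r θ)).congr_deriv ?_
  rw [show circleMap 0 r θ * I = r • (I * circleMap 0 1 θ) by
    rw [circleMap_zero_eq_mul r, Complex.real_smul]; ring, map_smul, Complex.real_smul,
    angularDeriv]

lemma smul_inv_mul_dbar_circleMap {r : ℝ} (hr : r ≠ 0) (θ : ℝ) :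
    r • ((circleMap 0 r θ)⁻¹ * dbar h (circleMap 0 r θ))
      = radialDeriv h (r, θ) + I * angularDeriv h (r, θ) := by
  have hr' : (r : ℂ) ≠ 0 := by exact_mod_cast hr
  have hu : circleMap 0 1 θ ≠ 0 := circleMap_ne_center one_ne_zero
  have hr1 : (r : ℂ) * (circleMap 0 r θ)⁻¹ * circleMap 0 1 θ = 1 := by
    rw [circleMap_zero_eq_mul r]
    field_simp
  rw [dbar_eq_rotate h _ (by simp : ‖circleMap 0 1 θ‖ = 1), Complex.real_smul, ← mul_assoc,
    ← mul_assoc, hr1, one_mul]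
  rfl

lemma integrableOn_polarCoord_target {F : ℝ × ℝ → ℂ} {R : ℝ} (hF : Continuous F)
    (hFR : ∀ p : ℝ × ℝ, R < p.1 → F p = 0) :
    IntegrableOn F (Ioi 0 ×ˢ Ioo (-Real.pi) Real.pi) := by
  have hK : IntegrableOn F (Icc 0 R ×ˢ Icc (-Real.pi) Real.pi) :=
    hF.continuousOn.integrableOn_compact (isCompact_Icc.prod isCompact_Icc)
  refine hK.of_forall_sdiff_eq_zero (measurableSet_Ioi.prod measurableSet_Ioo) ?_
  rintro ⟨r, θ⟩ ⟨⟨hr, hθ⟩, hnot⟩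
  refine hFR _ (lt_of_not_ge fun hle ↦ hnot ⟨⟨(mem_Ioi.1 hr).le, hle⟩, hθ.1.le, hθ.2.le⟩)

lemma exists_fderiv_circleMap_eq_zero (hc : HasCompactSupport h) :
    ∃ R, ∀ p : ℝ × ℝ, R < p.1 → fderiv ℝ h (circleMap 0 p.1 p.2) = 0 := by
  obtain ⟨R, hR⟩ := hc.isCompact.isBounded.exists_norm_le
  refine ⟨R, fun p hp ↦ by_contra fun hne ↦ ?_⟩
  have hle := hR _ (support_fderiv_subset ℝ hne)
  rw [norm_circleMap_zero] at hle
  linarith [le_abs_self p.1]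

lemma integrableOn_radialDeriv (hh : ContDiff ℝ 1 h) (hc : HasCompactSupport h) :
    IntegrableOn (radialDeriv h) (Ioi 0 ×ˢ Ioo (-Real.pi) Real.pi) := by
  obtain ⟨R, hR⟩ := exists_fderiv_circleMap_eq_zero hc
  refine integrableOn_polarCoord_target (R := R) (continuous_radialDeriv hh) fun p hp ↦ ?_
  simp [radialDeriv, hR p hp]

lemma integrableOn_angularDeriv (hh : ContDiff ℝ 1 h) (hc : HasCompactSupport h) :
    IntegrableOn (angularDeriv h) (Ioi 0 ×ˢ Ioo (-Real.pi) Real.pi) := by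
  obtain ⟨R, hR⟩ := exists_fderiv_circleMap_eq_zero hc
  refine integrableOn_polarCoord_target (R := R) (continuous_angularDeriv hh) fun p hp ↦ ?_
  simp [angularDeriv, hR p hp]

lemma integral_radialDeriv_radius (hh : ContDiff ℝ 1 h) (hc : HasCompactSupport h) (θ : ℝ) :
    ∫ r in Ioi 0, radialDeriv h (r, θ) = -h 0 := by
  have hderiv (r : ℝ) := hasDerivAt_comp_circleMap_radius (hh.differentiable one_ne_zero) r θ
  have hk : ContDiff ℝ 1 fun r : ℝ ↦ h (circleMap 0 r θ) := by
    simp only [circleMap_zero]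
    exact hh.comp (Complex.ofRealCLM.contDiff.mul contDiff_const)
  have hkc : HasCompactSupport fun r : ℝ ↦ h (circleMap 0 r θ) := by
    obtain ⟨R, hR⟩ := hc.isCompact.isBounded.exists_norm_le
    refine HasCompactSupport.intro (isCompact_Icc (a := -R) (b := R)) fun r hr ↦ ?_
    refine by_contra fun hne ↦ hr (abs_le.1 ?_)
    simpa using hR _ (subset_tsupport h hne)
  simpa [(hderiv _).deriv] using hkc.integral_Ioi_deriv_eq hk 0

lemma integral_angularDeriv_angle (hh : ContDiff ℝ 1 h) {r : ℝ} (hr : r ≠ 0) :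
    ∫ θ in Ioo (-Real.pi) Real.pi, angularDeriv h (r, θ) = 0 := by
  have hr' : (r : ℂ) ≠ 0 := by exact_mod_cast hr
  have hcont : Continuous fun θ ↦ r * angularDeriv h (r, θ) :=
    continuous_const.mul ((continuous_angularDeriv hh).comp (by fun_prop))
  have hFTC := intervalIntegral.integral_eq_sub_of_hasDerivAt
    (fun θ _ ↦ hasDerivAt_comp_circleMap_angle (hh.differentiable one_ne_zero) r θ)
    (hcont.intervalIntegrable (-Real.pi) Real.pi)
  have hends : circleMap 0 r (-Real.pi) = circleMap 0 r Real.pi := by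
    rw [← periodic_circleMap 0 r (-Real.pi)]
    congr 1
    ring
  rw [hends, sub_self, intervalIntegral.integral_const_mul,
    intervalIntegral.integral_of_le (by linarith [Real.pi_pos]),
    integral_Ioc_eq_integral_Ioo] at hFTC
  exact (mul_eq_zero.1 hFTC).resolve_left hr'

theorem integral_inv_mul_dbar (hh : ContDiff ℝ 1 h) (hc : HasCompactSupport h) :
    ∫ ζ : ℂ, ζ⁻¹ * dbar h ζ = -(2 * Real.pi) * h 0 := by
  have hrad := integrableOn_radialDeriv hh hc
  have hang := integrableOn_angularDeriv hh hc
  have hpolar : ∫ ζ : ℂ, ζ⁻¹ * dbar h ζ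
      = ∫ p in Ioi 0 ×ˢ Ioo (-Real.pi) Real.pi, (radialDeriv h p + I * angularDeriv h p) := by
    rw [← Complex.integral_comp_polarCoord_symm]
    refine setIntegral_congr_fun (measurableSet_Ioi.prod measurableSet_Ioo) ?_
    rintro ⟨r, θ⟩ ⟨hr, -⟩
    have hp : Complex.polarCoord.symm (r, θ) = circleMap 0 r θ := by
      rw [Complex.polarCoord_symm_apply, circleMap_zero, Complex.exp_mul_I]
      simp
    dsimp only
    rw [hp, smul_inv_mul_dbar_circleMap (mem_Ioi.1 hr).ne']
  rw [hpolar, integral_add hrad (hang.const_mul I), integral_const_mul]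
  rw [Measure.volume_eq_prod] at hrad hang ⊢
  have hrad' : ∫ p in Ioi 0 ×ˢ Ioo (-Real.pi) Real.pi, radialDeriv h p
      ∂(volume : Measure ℝ).prod volume = -(2 * Real.pi) * h 0 := by
    rw [← setIntegral_prod_swap, setIntegral_prod (fun p ↦ radialDeriv h p.swap) hrad.swap]
    simp only [Prod.swap_prod_mk, integral_radialDeriv_radius hh hc, setIntegral_const,
      Real.volume_real_Ioo_of_le (by linarith [Real.pi_pos] : -Real.pi ≤ Real.pi),
      Complex.real_smul]
    push_cast
    ring
  have hang' : ∫ p in Ioi 0 ×ˢ Ioo (-Real.pi) Real.pi, angularDeriv h p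
      ∂(volume : Measure ℝ).prod volume = 0 := by
    rw [setIntegral_prod _ hang]
    exact setIntegral_eq_zero_of_forall_eq_zero fun r hr ↦
      integral_angularDeriv_angle hh (mem_Ioi.1 hr).ne'
  rw [hrad', hang', mul_zero, add_zero]

end Pompeiu

/-! ### Solving the inhomogeneous Cauchy–Riemann equation -/

lemma locallyIntegrable_inv : LocallyIntegrable fun z : ℂ ↦ z⁻¹ :=
  locallyIntegrable_of_norm_le_rpow (C := 1) (α := 1) (by simp) (by simp)
    (.of_forall fun z ↦ by rw [norm_inv, one_mul, Real.rpow_neg_one])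
    measurable_inv.aestronglyMeasurable

lemma integral_closedBall_norm_inv {R : ℝ} (hR : 0 ≤ R) :
    ∫ ζ in closedBall (0 : ℂ) R, ‖ζ⁻¹‖ = 2 * Real.pi * R := by
  have hradial : (closedBall (0 : ℂ) R).indicator (fun ζ ↦ ‖ζ⁻¹‖)
      = fun ζ ↦ (Iic R).indicator (fun r ↦ r⁻¹) ‖ζ‖ := by
    ext ζ
    simp [indicator]
  have hint :
      ∫ r in Ioi (0 : ℝ), r ^ (Module.finrank ℝ ℂ - 1) • (Iic R).indicator (·⁻¹) r = R := by
    calc _ = ∫ r in Ioi (0 : ℝ), (Iic R).indicator 1 r := by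
          refine setIntegral_congr_fun measurableSet_Ioi fun r hr ↦ ?_
          have hr0 : r ≠ 0 := (mem_Ioi.1 hr).ne'
          by_cases hrR : r ∈ Iic R <;> simp [hrR, hr0]
      _ = R := by
          rw [integral_indicator_one measurableSet_Iic,
            measureReal_restrict_apply measurableSet_Iic, inter_comm, Ioi_inter_Iic,
            Real.volume_real_Ioc_of_le hR, sub_zero]
  rw [← integral_indicator isClosed_closedBall.measurableSet, hradial,
    integral_fun_norm_addHaar volume, hint]
  simp [Measure.real, Complex.volume_ball, mul_assoc]

/-- The Cauchy transform `(2π)⁻¹ ∫ g(ζ) / (z - ζ) dζ`; with this normalisation it inverts `dbar`. -/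
noncomputable def cauchyTransform (g : ℂ → ℂ) (z : ℂ) : ℂ :=
  (2 * Real.pi : ℂ)⁻¹ * ∫ ζ : ℂ, ζ⁻¹ * g (z - ζ)

section CauchyTransform

variable {g : ℂ → ℂ}

lemma cauchyTransform_eq_convolution (g : ℂ → ℂ) :
    cauchyTransform g = fun z ↦ (2 * Real.pi : ℂ)⁻¹ *
      convolution (fun z : ℂ ↦ z⁻¹) g (ContinuousLinearMap.mul ℝ ℂ) volume z := rfl

lemma contDiff_cauchyTransform (hg : ContDiff ℝ 1 g) (hc : HasCompactSupport g) :
    ContDiff ℝ 1 (cauchyTransform g) :=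
  contDiff_const.mul
    (hc.contDiff_convolution_right (ContinuousLinearMap.mul ℝ ℂ) locallyIntegrable_inv hg)

theorem dbar_cauchyTransform (hg : ContDiff ℝ 1 g) (hc : HasCompactSupport g) (z : ℂ) :
    dbar (cauchyTransform g) z = g z := by
  set L := ContinuousLinearMap.mul ℝ ℂ
  have hu : HasFDerivAt (convolution (fun z : ℂ ↦ z⁻¹) g L volume) _ z :=
    hc.hasFDerivAt_convolution_right L locallyIntegrable_inv hg z
  have hexists : ConvolutionExistsAt (fun z : ℂ ↦ z⁻¹) (fderiv ℝ g) z (L.precompR ℂ) volume :=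
    (hc.fderiv ℝ).convolutionExists_right (L.precompR ℂ) locallyIntegrable_inv
      (hg.continuous_fderiv one_ne_zero) z
  have hint (v : ℂ) : Integrable fun ζ : ℂ ↦ ζ⁻¹ * fderiv ℝ g (z - ζ) v :=
    hexists.apply_continuousLinearMap v
  have hfderiv (v : ℂ) : fderiv ℝ (convolution (fun z : ℂ ↦ z⁻¹) g L volume) z v
      = ∫ ζ : ℂ, ζ⁻¹ * fderiv ℝ g (z - ζ) v := by
    rw [hu.fderiv, convolution, ContinuousLinearMap.integral_apply hexists]
    rfl
  have hdbar : dbar (convolution (fun z : ℂ ↦ z⁻¹) g L volume) z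
      = ∫ ζ : ℂ, ζ⁻¹ * dbar g (z - ζ) := by
    rw [dbar, hfderiv, hfderiv, ← integral_const_mul,
      ← integral_add (hint 1) ((hint I).const_mul I)]
    simp only [dbar]
    congr with ζ
    ring
  have hpompeiu : ∫ ζ : ℂ, ζ⁻¹ * dbar g (z - ζ) = 2 * Real.pi * g z := by
    have h := integral_inv_mul_dbar (h := fun ζ ↦ g (z - ζ))
      (hg.comp (contDiff_const.sub contDiff_id)) (hc.comp_homeomorph (Homeomorph.subLeft z))
    simp only [dbar_comp_const_sub (hg.differentiable one_ne_zero _), mul_neg, integral_neg,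
      sub_zero] at h
    linear_combination -h
  have hpi : (Real.pi : ℂ) ≠ 0 := by exact_mod_cast Real.pi_ne_zero
  rw [cauchyTransform_eq_convolution, dbar_const_mul _ hu.differentiableAt, hdbar, hpompeiu]
  field_simp

lemma norm_cauchyTransform_le {R K : ℝ} (hsupp : ∀ z ∉ closedBall (0 : ℂ) R, g z = 0)
    (hgK : ∀ z, ‖g z‖ ≤ K) {z : ℂ} (hz : z ∈ closedBall 0 R) :
    ‖cauchyTransform g z‖ ≤ 2 * R * K := by
  have hR : 0 ≤ R := nonempty_closedBall.1 ⟨z, hz⟩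
  have hrestrict : ∫ ζ : ℂ, ζ⁻¹ * g (z - ζ) = ∫ ζ in closedBall 0 (2 * R), ζ⁻¹ * g (z - ζ) := by
    refine (setIntegral_eq_integral_of_forall_compl_eq_zero fun ζ hζ ↦ ?_).symm
    rw [hsupp, mul_zero]
    rw [mem_closedBall_zero_iff] at hz hζ ⊢
    have := norm_sub_le z (z - ζ)
    rw [sub_sub_cancel] at this
    linarith
  have hbound : ‖∫ ζ in closedBall (0 : ℂ) (2 * R), ζ⁻¹ * g (z - ζ)‖
      ≤ 2 * Real.pi * (2 * R) * K := by
    rw [← integral_closedBall_norm_inv (by positivity), ← integral_mul_const]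
    refine norm_integral_le_of_norm_le (((locallyIntegrable_inv.integrableOn_isCompact
      (isCompact_closedBall 0 _)).norm).mul_const K) (.of_forall fun ζ ↦ ?_)
    rw [norm_mul]
    exact mul_le_mul_of_nonneg_left (hgK _) (norm_nonneg _)
  have hpi := Real.pi_pos
  have hnorm : ‖(2 * Real.pi : ℂ)⁻¹‖ = (2 * Real.pi)⁻¹ := by
    simp [abs_of_pos hpi]
  calc ‖cauchyTransform g z‖ ≤ (2 * Real.pi)⁻¹ * (2 * Real.pi * (2 * R) * K) := by
        rw [cauchyTransform, norm_mul, hnorm, hrestrict]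
        gcongr
    _ = 2 * R * K := by field_simp

end CauchyTransform

lemma contDiff_bump_smul {E F : Type*} [NormedAddCommGroup E] [NormedSpace ℝ E]
    [HasContDiffBump E] [NormedAddCommGroup F] [NormedSpace ℝ F] {c : E} (χ : ContDiffBump c)
    {n : ℕ∞} {R : ℝ} (hR : χ.rOut < R) {g : E → F} (hg : ContDiffOn ℝ n g (ball c R)) :
    ContDiff ℝ n fun z ↦ χ z • g z := by
  refine contDiff_iff_contDiffAt.2 fun z ↦ ?_
  by_cases hz : z ∈ ball c R
  · exact χ.contDiff.contDiffAt.smul (hg.contDiffAt (isOpen_ball.mem_nhds hz))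
  · refine contDiffAt_const (c := 0) |>.congr_of_eventuallyEq ?_
    have hfar : (closedBall c χ.rOut)ᶜ ∈ nhds z :=
      isClosed_closedBall.isOpen_compl.mem_nhds fun h ↦ hz (closedBall_subset_ball hR h)
    filter_upwards [hfar] with w hw
    rw [χ.zero_of_le_dist (not_le.1 (mem_closedBall.not.1 hw)).le, zero_smul]

theorem exists_contDiff_dbar_eq {r R K : ℝ} (hr : 0 < r) (hrR : r < R) {g : ℂ → ℂ}
    (hg : ContDiffOn ℝ 1 g (ball 0 R)) (hgK : ∀ z ∈ ball (0 : ℂ) R, ‖g z‖ ≤ K) :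
    ∃ s : ℂ → ℂ, ContDiff ℝ 1 s ∧ ∀ z ∈ ball (0 : ℂ) r, dbar s z = g z ∧ ‖s z‖ ≤ 2 * R * K := by
  let χ : ContDiffBump (0 : ℂ) := ⟨r, (r + R) / 2, hr, by linarith⟩
  have hK : 0 ≤ K := (norm_nonneg _).trans (hgK 0 (mem_ball_self (hr.trans hrR)))
  have hsmooth : ContDiff ℝ 1 fun z ↦ χ z • g z :=
    contDiff_bump_smul χ (show (r + R) / 2 < R by linarith) hg
  have hsupp (z : ℂ) (hz : z ∉ ball 0 R) : χ z • g z = 0 := by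
    rw [χ.zero_of_le_dist ((show (r + R) / 2 ≤ R by linarith).trans (not_lt.1 hz)), zero_smul]
  have hcompact : HasCompactSupport fun z ↦ χ z • g z := χ.hasCompactSupport.smul_right
  have hbound (z : ℂ) : ‖χ z • g z‖ ≤ K := by
    by_cases hz : z ∈ ball 0 R
    · rw [norm_smul, Real.norm_of_nonneg χ.nonneg]
      exact (mul_le_of_le_one_left (norm_nonneg _) χ.le_one).trans (hgK z hz)
    · rwa [hsupp z hz, norm_zero]
  refine ⟨_, contDiff_cauchyTransform hsmooth hcompact, fun z hz ↦ ⟨?_, ?_⟩⟩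
  · rw [dbar_cauchyTransform hsmooth hcompact, χ.one_of_mem_closedBall (ball_subset_closedBall hz),
      one_smul]
  · exact norm_cauchyTransform_le (fun w hw ↦ hsupp w fun h ↦ hw (ball_subset_closedBall h)) hbound
      (ball_subset_closedBall (ball_subset_ball hrR.le hz))

/-! ### The similarity principle -/

section Similarity

variable {f : ℂ → ℂ} {κ P R : ℝ}

/-- The quotient `(dbar f) / f` regularised at scale `κ`, so that it is smooth across the zeros
of `f`. -/
noncomputable def regularizedLogDbar (κ : ℝ) (f : ℂ → ℂ) (z : ℂ) : ℂ :=
  (‖f z‖ ^ 2 + κ ^ 2)⁻¹ • (dbar f z * conj (f z))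

lemma contDiffOn_regularizedLogDbar (hκ : 0 < κ) {U : Set ℂ} (hf : ContDiffOn ℝ 1 f U)
    (hdf : ContDiffOn ℝ 1 (dbar f) U) : ContDiffOn ℝ 1 (regularizedLogDbar κ f) U :=
  (((hf.norm_sq ℝ).add contDiffOn_const).inv fun z _ ↦ by positivity).smul
    (hdf.mul (Complex.conjCLE.contDiff.comp_contDiffOn hf))

lemma norm_regularizedLogDbar_le (hκ : 0 < κ) (hP : 0 ≤ P) {z : ℂ}
    (hfz : ‖dbar f z‖ ≤ P * ‖f z‖) : ‖regularizedLogDbar κ f z‖ ≤ P := by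
  have hD : 0 < ‖f z‖ ^ 2 + κ ^ 2 := by positivity
  rw [regularizedLogDbar, norm_smul, norm_mul, RCLike.norm_conj, norm_inv,
    Real.norm_of_nonneg hD.le, inv_mul_le_iff₀ hD]
  calc ‖dbar f z‖ * ‖f z‖ ≤ P * ‖f z‖ * ‖f z‖ := by gcongr
    _ ≤ (‖f z‖ ^ 2 + κ ^ 2) * P := by nlinarith [mul_nonneg hP (sq_nonneg κ)]

lemma norm_dbar_sub_regularizedLogDbar_mul_le (hκ : 0 < κ) (hP : 0 ≤ P) {z : ℂ}
    (hfz : ‖dbar f z‖ ≤ P * ‖f z‖) : ‖dbar f z - regularizedLogDbar κ f z * f z‖ ≤ P * κ := by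
  have hD : 0 < ‖f z‖ ^ 2 + κ ^ 2 := by positivity
  have hdiff : dbar f z - regularizedLogDbar κ f z * f z
      = (κ ^ 2 / (‖f z‖ ^ 2 + κ ^ 2)) • dbar f z := by
    have hD' : (‖f z‖ ^ 2 + κ ^ 2 : ℂ) ≠ 0 := by exact_mod_cast hD.ne'
    rw [regularizedLogDbar, Complex.real_smul, Complex.real_smul]
    push_cast
    field_simp
    linear_combination (-dbar f z) * Complex.conj_mul' (f z)
  rw [hdiff, norm_smul, Real.norm_of_nonneg (by positivity), div_mul_eq_mul_div,
    div_le_iff₀ hD]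
  calc κ ^ 2 * ‖dbar f z‖ ≤ κ ^ 2 * (P * ‖f z‖) := by gcongr
    _ = P * κ * (‖f z‖ * κ) := by ring
    _ ≤ P * κ * (‖f z‖ ^ 2 + κ ^ 2) := by
      gcongr
      nlinarith [sq_nonneg (‖f z‖ - κ), norm_nonneg (f z)]

lemma norm_exp_neg_le {s : ℂ} {c : ℝ} (hs : ‖s‖ ≤ c) : ‖Complex.exp (-s)‖ ≤ Real.exp c :=
  (Complex.norm_exp_le_exp_norm _).trans (Real.exp_le_exp.2 (by rwa [norm_neg]))

lemma differentiableAt_exp_neg_mul_sub {s t : ℂ → ℂ} {z : ℂ} (hf : DifferentiableAt ℝ f z)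
    (hs : DifferentiableAt ℝ s z) (ht : DifferentiableAt ℝ t z)
    (h : dbar t z = Complex.exp (-s z) * (dbar f z - dbar s z * f z)) :
    DifferentiableAt ℂ (fun w ↦ Complex.exp (-s w) * f w - t w) z := by
  have he : DifferentiableAt ℝ (fun w ↦ Complex.exp (-s w)) z := hs.fun_neg.cexp
  refine differentiableAt_of_dbar_eq_zero ((he.mul hf).sub ht) ?_
  refine (dbar_sub (f := fun w ↦ Complex.exp (-s w) * f w) (he.mul hf) ht).trans ?_
  rw [dbar_mul he hf, dbar_exp_neg hs, h]
  ring

theorem exists_similarity (hP : 0 ≤ P) (hf : ContDiffOn ℝ 1 f (ball 0 R))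
    (hdf : ContDiffOn ℝ 1 (dbar f) (ball 0 R))
    (hfP : ∀ z ∈ ball (0 : ℂ) R, ‖dbar f z‖ ≤ P * ‖f z‖) {r : ℝ} (hr : 0 < r) (hrR : r < R)
    {η : ℝ} (hη : 0 < η) :
    ∃ s H : ℂ → ℂ, DifferentiableOn ℂ H (ball 0 r) ∧ ∀ z ∈ ball (0 : ℂ) r,
      ‖s z‖ ≤ 2 * R * P ∧ ‖H z - Complex.exp (-s z) * f z‖ ≤ η := by
  obtain ⟨r', hr', hr'R⟩ := exists_between hrR
  obtain ⟨κ, hκ, hκη⟩ := exists_pos_mul_lt hη (2 * R * (Real.exp (2 * R * P) * P))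
  have hsub : ball (0 : ℂ) r' ⊆ ball 0 R := ball_subset_ball hr'R.le
  have hsub' : ball (0 : ℂ) r ⊆ ball 0 r' := ball_subset_ball hr'.le
  obtain ⟨s, hs, hsg⟩ := exists_contDiff_dbar_eq (hr.trans hr') hr'R
    (contDiffOn_regularizedLogDbar hκ hf hdf)
    fun z hz ↦ norm_regularizedLogDbar_le hκ hP (hfP z hz)
  have hexp : ContDiff ℝ 1 fun z ↦ Complex.exp (-s z) := hs.neg.cexp
  obtain ⟨t, ht, htE⟩ := exists_contDiff_dbar_eq hr hr'
    (g := fun z ↦ Complex.exp (-s z) * (dbar f z - regularizedLogDbar κ f z * f z))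
    (K := Real.exp (2 * R * P) * (P * κ))
    (hexp.contDiffOn.mul ((hdf.sub ((contDiffOn_regularizedLogDbar hκ hf hdf).mul hf)).mono hsub))
    fun z hz ↦ by
      rw [norm_mul]
      exact mul_le_mul (norm_exp_neg_le (hsg z hz).2)
        (norm_dbar_sub_regularizedLogDbar_mul_le hκ hP (hfP z (hsub hz))) (norm_nonneg _)
        (Real.exp_pos _).le
  refine ⟨s, fun z ↦ Complex.exp (-s z) * f z - t z, fun z hz ↦ ?_, fun z hz ↦ ⟨?_, ?_⟩⟩
  · have hfz : DifferentiableAt ℝ f z := (hf.contDiffAt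
      (isOpen_ball.mem_nhds (hsub (hsub' hz)))).differentiableAt one_ne_zero
    refine (differentiableAt_exp_neg_mul_sub hfz (hs.differentiable one_ne_zero z)
      (ht.differentiable one_ne_zero z) ?_).differentiableWithinAt
    rw [(htE z hz).1, (hsg z (hsub' hz)).1]
  · exact (hsg z (hsub' hz)).2
  · rw [sub_sub_cancel_left, norm_neg]
    calc ‖t z‖ ≤ 2 * r' * (Real.exp (2 * R * P) * (P * κ)) := (htE z hz).2
      _ ≤ 2 * R * (Real.exp (2 * R * P) * (P * κ)) := by gcongr
      _ = 2 * R * (Real.exp (2 * R * P) * P) * κ := by ring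
      _ ≤ η := hκη.le

end Similarity

/-! ### Interpolation at separated nodes -/

lemma exists_mem_ofReal_lt_volume_inter_Ici {ω : Set ℝ} (hω : BddBelow ω) {a h : ℝ} (ha : 0 ≤ a)
    (hh : 0 ≤ h) (hvol : ENNReal.ofReal (a + h) < volume ω) :
    ∃ x ∈ ω, ENNReal.ofReal a < volume (ω ∩ Ici (x + h)) := by
  have hne : ω.Nonempty := nonempty_of_measure_ne_zero (zero_le.trans_lt hvol).ne'
  obtain ⟨b, -, hbvol⟩ := ENNReal.lt_iff_exists_real_btwn.1 hvol
  have hab : a + h < b := ((ENNReal.ofReal_lt_ofReal_iff_of_nonneg (by positivity)).1 hbvol.1)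
  obtain ⟨x, hx, hxlt⟩ := exists_lt_of_csInf_lt hne
    (lt_add_of_pos_right (sInf ω) (sub_pos.2 hab))
  refine ⟨x, hx, ?_⟩
  by_contra! hle
  refine hbvol.2.not_ge ?_
  calc volume ω ≤ volume (Ico (sInf ω) (x + h) ∪ ω ∩ Ici (x + h)) := by
        refine measure_mono fun y hy ↦ ?_
        rcases lt_or_ge y (x + h) with hyx | hyx
        · exact .inl ⟨csInf_le hω hy, hyx⟩
        · exact .inr ⟨hy, hyx⟩
    _ ≤ ENNReal.ofReal (x + h - sInf ω) + ENNReal.ofReal a := by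
        refine (measure_union_le _ _).trans ?_
        rw [Real.volume_Ico]
        gcongr
    _ ≤ ENNReal.ofReal b := by
        rw [← ENNReal.ofReal_add (by linarith [csInf_le hω hx]) ha]
        exact ENNReal.ofReal_le_ofReal (by linarith)

theorem exists_separated_nodes {h : ℝ} (hh : 0 ≤ h) (n : ℕ) :
    ∀ {ω : Set ℝ}, BddBelow ω → ENNReal.ofReal (n * h) < volume ω →
      ∃ x : ℕ → ℝ, (∀ i ≤ n, x i ∈ ω) ∧ ∀ j ≤ n, ∀ i ≤ j, (j - i) * h ≤ x j - x i := by
  induction n with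
  | zero =>
    intro ω _ hvol
    obtain ⟨x, hx⟩ := nonempty_of_measure_ne_zero (zero_le.trans_lt hvol).ne'
    refine ⟨fun _ ↦ x, fun _ _ ↦ hx, fun j hj i hi ↦ ?_⟩
    obtain rfl : j = 0 := by omega
    obtain rfl : i = 0 := by omega
    simp
  | succ n ih =>
    intro ω hω hvol
    rw [Nat.cast_succ, add_one_mul] at hvol
    obtain ⟨x₀, hx₀, hvol'⟩ := exists_mem_ofReal_lt_volume_inter_Ici hω (by positivity) hh hvol
    obtain ⟨x, hxω, hx⟩ := ih (hω.mono inter_subset_left) hvol'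
    refine ⟨fun i ↦ i.casesOn x₀ x, ?_, ?_⟩
    · rintro (_ | i) hi
      exacts [hx₀, (hxω i (by omega)).1]
    · rintro (_ | j) hj (_ | i) hi
      · simp
      · omega
      · have hgap : x₀ + h ≤ x 0 := (hxω 0 n.zero_le).2
        have := hx j (by omega) 0 j.zero_le
        change ((j + 1 : ℕ) - (0 : ℕ)) * h ≤ x j - x₀
        push_cast at this ⊢
        linarith
      · simpa using hx j (by omega) i (by omega)

lemma prod_erase_range_abs_sub {i n : ℕ} (hi : i ≤ n) :
    ∏ j ∈ (Finset.range (n + 1)).erase i, |(i : ℝ) - j| = i.factorial * (n - i).factorial := by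
  induction n, hi using Nat.le_induction with
  | base =>
    rw [Finset.range_add_one, Finset.erase_insert Finset.notMem_range_self,
      ← Finset.prod_range_reflect, Nat.sub_self, Nat.factorial_zero, Nat.cast_one, mul_one,
      ← Finset.prod_range_add_one_eq_factorial, Nat.cast_prod]
    refine Finset.prod_congr rfl fun j hj ↦ ?_
    have hji : j + 1 ≤ i := Finset.mem_range.1 hj
    rw [Nat.sub_sub, add_comm 1 j, Nat.cast_sub hji, sub_sub_cancel, Nat.abs_cast]
  | succ n hin ih =>
    rw [Finset.range_add_one, Finset.erase_insert_of_ne (by omega), Finset.prod_insert (by simp),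
      ih, Nat.succ_sub hin, Nat.factorial_succ, Nat.cast_mul, Nat.cast_succ, Nat.cast_succ,
      Nat.cast_sub hin, abs_sub_comm, abs_of_nonneg]
    · ring
    · have : (i : ℝ) ≤ n := by exact_mod_cast hin
      linarith

lemma sum_inv_factorial_mul_factorial (n : ℕ) :
    ∑ i ∈ Finset.range (n + 1), ((i.factorial : ℝ) * (n - i).factorial)⁻¹
      = 2 ^ n / n.factorial := by
  have hn : (n.factorial : ℝ) ≠ 0 := by exact_mod_cast n.factorial_ne_zero
  rw [eq_div_iff hn, Finset.sum_mul]
  calc _ = ∑ i ∈ Finset.range (n + 1), (n.choose i : ℝ) := by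
        refine Finset.sum_congr rfl fun i hi ↦ ?_
        rw [Nat.cast_choose ℝ (Finset.mem_range_succ_iff.1 hi), inv_mul_eq_div]
    _ = 2 ^ n := by exact_mod_cast Nat.sum_range_choose n

section Lagrange

variable {n : ℕ} {v : ℕ → ℂ} {h : ℝ} {w : ℂ}

lemma norm_eval_lagrangeBasis_le (hh : 0 < h) (hv : ∀ i ≤ n, ‖v i‖ ≤ 1)
    (hsep : ∀ i ≤ n, ∀ j ≤ n, |(i : ℝ) - j| * h ≤ ‖v i - v j‖) (hw : ‖w‖ ≤ 1) {i : ℕ}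
    (hi : i ≤ n) :
    ‖(Lagrange.basis (Finset.range (n + 1)) v i).eval w‖
      ≤ (2 / h) ^ n * ((i.factorial : ℝ) * (n - i).factorial)⁻¹ := by
  have hcard : ((Finset.range (n + 1)).erase i).card = n := by
    rw [Finset.card_erase_of_mem (Finset.mem_range_succ_iff.2 hi), Finset.card_range]
    rfl
  calc ‖(Lagrange.basis (Finset.range (n + 1)) v i).eval w‖
      = ∏ j ∈ (Finset.range (n + 1)).erase i, ‖v i - v j‖⁻¹ * ‖w - v j‖ := by
        simp only [Lagrange.basis, Lagrange.basisDivisor, Polynomial.eval_prod, norm_prod,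
          Polynomial.eval_mul, Polynomial.eval_C, Polynomial.eval_sub, Polynomial.eval_X, norm_mul,
          norm_inv]
    _ ≤ ∏ j ∈ (Finset.range (n + 1)).erase i, 2 / h * |(i : ℝ) - j|⁻¹ := by
        refine Finset.prod_le_prod (fun _ _ ↦ by positivity) fun j hj ↦ ?_
        obtain ⟨hji, hj⟩ := Finset.mem_erase.1 hj
        have hjn : j ≤ n := Finset.mem_range_succ_iff.1 hj
        have hij : 0 < |(i : ℝ) - j| := abs_pos.2 (sub_ne_zero.2 (by exact_mod_cast hji.symm))
        have hwv : ‖w - v j‖ ≤ 2 := (norm_sub_le _ _).trans (by linarith [hv j hjn])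
        calc ‖v i - v j‖⁻¹ * ‖w - v j‖ ≤ (|(i : ℝ) - j| * h)⁻¹ * 2 := by
              gcongr
              exact hsep i hi j hjn
          _ = 2 / h * |(i : ℝ) - j|⁻¹ := by
              rw [mul_inv]
              ring
    _ = (2 / h) ^ n * ((i.factorial : ℝ) * (n - i).factorial)⁻¹ := by
        rw [Finset.prod_mul_distrib, Finset.prod_const, hcard, Finset.prod_inv_distrib,
          prod_erase_range_abs_sub hi]

theorem norm_eval_interpolate_le (hh : 0 < h) (hv : ∀ i ≤ n, ‖v i‖ ≤ 1)
    (hsep : ∀ i ≤ n, ∀ j ≤ n, |(i : ℝ) - j| * h ≤ ‖v i - v j‖) (hw : ‖w‖ ≤ 1)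
    {y : ℕ → ℂ} {δ : ℝ} (hδ : 0 ≤ δ) (hy : ∀ i ≤ n, ‖y i‖ ≤ δ) :
    ‖(Lagrange.interpolate (Finset.range (n + 1)) v y).eval w‖
      ≤ (4 / h) ^ n / n.factorial * δ := by
  simp only [Lagrange.interpolate_apply, Polynomial.eval_finsetSum, Polynomial.eval_mul,
    Polynomial.eval_C]
  calc _ ≤ ∑ i ∈ Finset.range (n + 1),
        δ * ((2 / h) ^ n * ((i.factorial : ℝ) * (n - i).factorial)⁻¹) := by
        refine norm_sum_le_of_le _ fun i hi ↦ ?_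
        have hin := Finset.mem_range_succ_iff.1 hi
        rw [norm_mul]
        exact mul_le_mul (hy i hin) (norm_eval_lagrangeBasis_le hh hv hsep hw hin)
          (norm_nonneg _) hδ
    _ = (4 / h) ^ n / n.factorial * δ := by
        rw [← Finset.mul_sum, ← Finset.mul_sum, sum_inv_factorial_mul_factorial,
          show 4 / h = 2 / h * 2 by ring, mul_pow]
        ring

end Lagrange

/-! ### Propagation of smallness for holomorphic functions -/

lemma diffContOnCl_dslope {f : ℂ → ℂ} {U : Set ℂ} {a : ℂ} (hU : U ∈ nhds a)
    (hf : DiffContOnCl ℂ f U) : DiffContOnCl ℂ (dslope f a) U :=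
  ⟨(Complex.differentiableOn_dslope hU).2 hf.differentiableOn,
    (continuousOn_dslope (Filter.mem_of_superset hU subset_closure)).2
      ⟨hf.continuousOn, hf.differentiableOn.differentiableAt hU⟩⟩

lemma norm_one_sub_conj_mul_eq {a w : ℂ} (hw : ‖w‖ = 1) : ‖1 - conj a * w‖ = ‖w - a‖ := by
  have h : 1 - conj a * w = w * conj (w - a) := by
    rw [map_sub, mul_sub, Complex.mul_conj', hw]
    push_cast
    ring
  rw [h, norm_mul, hw, one_mul, RCLike.norm_conj]

theorem norm_mul_prod_one_sub_conj_mul_le {B : ℝ} {z : ℂ} (hz : ‖z‖ ≤ 1) (S : Finset ℂ) :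
    ∀ {G : ℂ → ℂ}, DiffContOnCl ℂ G (ball 0 1) → (∀ w : ℂ, ‖w‖ = 1 → ‖G w‖ ≤ B) →
      (∀ a ∈ S, ‖a‖ < 1) → (∀ a ∈ S, G a = 0) →
      ‖G z‖ * ∏ a ∈ S, ‖1 - conj a * z‖ ≤ B * ∏ a ∈ S, ‖z - a‖ := by
  induction S using Finset.induction_on with
  | empty =>
    intro G hG hB _ _
    simp only [Finset.prod_empty, mul_one]
    refine Complex.norm_le_of_forall_mem_frontier_norm_le isBounded_ball hG (fun w hw ↦ ?_) ?_
    · rw [frontier_ball (0 : ℂ) one_ne_zero] at hw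
      exact hB w (mem_sphere_zero_iff_norm.1 hw)
    · rwa [closure_ball (0 : ℂ) one_ne_zero, mem_closedBall_zero_iff]
  | insert a S haS ih =>
    intro G hG hB hS hG0
    rw [Finset.forall_mem_insert] at hS hG0
    have hfactor (w : ℂ) : G w = (w - a) * dslope G a w := by
      have := sub_smul_dslope G a w
      rwa [smul_eq_mul, hG0.1, sub_zero, eq_comm] at this
    have ha : ball (0 : ℂ) 1 ∈ nhds a := isOpen_ball.mem_nhds (mem_ball_zero_iff.2 hS.1)
    have hquot : DiffContOnCl ℂ (fun w ↦ (1 - conj a * w) • dslope G a w) (ball 0 1) :=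
      (Differentiable.diffContOnCl (by fun_prop)).smul (diffContOnCl_dslope ha hG)
    have h := ih hquot
      (fun w hw ↦ by
        rw [norm_smul, norm_one_sub_conj_mul_eq hw, ← norm_mul, ← hfactor]
        exact hB w hw)
      hS.2
      (fun b hb ↦ by
        have hba : b - a ≠ 0 := sub_ne_zero.2 fun h ↦ haS (h ▸ hb)
        rw [(mul_eq_zero.1 ((hfactor b).symm.trans (hG0.2 b hb))).resolve_left hba, smul_zero])
    rw [Finset.prod_insert haS, Finset.prod_insert haS, hfactor z, norm_mul]
    rw [norm_smul] at h
    calc _ = ‖z - a‖ * (‖1 - conj a * z‖ * ‖dslope G a z‖ * ∏ b ∈ S, ‖1 - conj b * z‖) := by ring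
      _ ≤ ‖z - a‖ * (B * ∏ b ∈ S, ‖z - b‖) := by gcongr
      _ = _ := by ring

lemma norm_sub_le_mul_norm_one_sub_conj_mul {a z : ℂ} {ρ σ : ℝ} (hρ : ρ ≤ 1) (hσ : σ ≤ 1)
    (ha : ‖a‖ ≤ ρ) (hz : ‖z‖ ≤ σ) :
    ‖z - a‖ ≤ (ρ + σ) / (1 + ρ * σ) * ‖1 - conj a * z‖ := by
  have hρ0 : 0 ≤ ρ := (norm_nonneg a).trans ha
  have hσ0 : 0 ≤ σ := (norm_nonneg z).trans hz
  have hdenom : 0 < 1 + ρ * σ := by positivity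
  have hidentity : ‖1 - conj a * z‖ ^ 2 - ‖z - a‖ ^ 2 = (1 - ‖a‖ ^ 2) * (1 - ‖z‖ ^ 2) := by
    simp only [Complex.sq_norm, Complex.normSq_apply, Complex.sub_re, Complex.sub_im,
      Complex.mul_re, Complex.mul_im, Complex.conj_re, Complex.conj_im, Complex.one_re,
      Complex.one_im]
    ring
  have hupper : ‖1 - conj a * z‖ ^ 2 ≤ (1 + ρ * σ) ^ 2 := by
    gcongr
    refine (norm_sub_le _ _).trans ?_
    rw [norm_one, norm_mul, RCLike.norm_conj]
    gcongr
  have hρ1 : ρ ^ 2 ≤ 1 := pow_le_one₀ hρ0 hρ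
  have hσ1 : σ ^ 2 ≤ 1 := pow_le_one₀ hσ0 hσ
  have haρ : ‖a‖ ^ 2 ≤ ρ ^ 2 := by gcongr
  have hzσ : ‖z‖ ^ 2 ≤ σ ^ 2 := by gcongr
  have hgap : (1 - ρ ^ 2) * (1 - σ ^ 2) ≤ (1 - ‖a‖ ^ 2) * (1 - ‖z‖ ^ 2) :=
    mul_le_mul (by linarith) (by linarith) (by linarith) (by linarith)
  have hgap0 : 0 ≤ (1 - ρ ^ 2) * (1 - σ ^ 2) := mul_nonneg (by linarith) (by linarith)
  rw [div_mul_eq_mul_div, le_div_iff₀ hdenom]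
  refine (sq_le_sq₀ (by positivity) (by positivity)).1 ?_
  have := mul_le_mul hupper hgap hgap0 (by positivity)
  rw [← hidentity] at this
  nlinarith

lemma norm_le_mul_pow_card {G : ℂ → ℂ} {B ρ σ : ℝ} {S : Finset ℂ} {z : ℂ} (hρ : ρ < 1)
    (hσ : σ < 1) (hG : DiffContOnCl ℂ G (ball 0 1)) (hB : ∀ w : ℂ, ‖w‖ = 1 → ‖G w‖ ≤ B)
    (hS : ∀ a ∈ S, ‖a‖ ≤ ρ) (hG0 : ∀ a ∈ S, G a = 0) (hz : ‖z‖ ≤ σ) :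
    ‖G z‖ ≤ B * ((ρ + σ) / (1 + ρ * σ)) ^ S.card := by
  have hB0 : 0 ≤ B := (norm_nonneg _).trans (hB 1 norm_one)
  have hpos : 0 < ∏ a ∈ S, ‖1 - conj a * z‖ := by
    refine Finset.prod_pos fun a ha ↦ norm_pos_iff.2 fun h0 ↦ ?_
    have h1 : ‖conj a * z‖ = 1 := by rw [← sub_eq_zero.1 h0, norm_one]
    rw [norm_mul, RCLike.norm_conj] at h1
    nlinarith [hS a ha, norm_nonneg a, norm_nonneg z]
  refine le_of_mul_le_mul_right ?_ hpos
  calc _ ≤ B * ∏ a ∈ S, ‖z - a‖ :=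
        norm_mul_prod_one_sub_conj_mul_le (hz.trans hσ.le) S hG hB
          (fun a ha ↦ (hS a ha).trans_lt hρ) hG0
    _ ≤ B * ∏ a ∈ S, ((ρ + σ) / (1 + ρ * σ) * ‖1 - conj a * z‖) := by
        gcongr with a ha
        exact norm_sub_le_mul_norm_one_sub_conj_mul hρ.le hσ.le (hS a ha) hz
    _ = _ := by rw [Finset.prod_mul_distrib, Finset.prod_const, mul_assoc]

lemma four_div_pow_div_factorial_le {m : ℝ} (hm : 0 < m) (n : ℕ) :
    (4 / (m / (n + 1))) ^ n / n.factorial ≤ Real.exp 1 * (4 * Real.exp 1 / m) ^ n := by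
  calc _ = (4 / m) ^ n * ((n + 1 : ℝ) ^ n / n.factorial) := by
        rw [div_div_eq_mul_div, mul_div_right_comm, mul_pow, mul_div_assoc]
    _ ≤ (4 / m) ^ n * Real.exp (n + 1) := by
        gcongr
        exact Real.pow_div_factorial_le_exp _ (by positivity) n
    _ = _ := by
        rw [Real.exp_add, ← Real.exp_one_pow, mul_div_right_comm, mul_pow]
        ring

section Propagation

variable {ω : Set ℝ} {m ρ σ δ B : ℝ}

theorem exists_interpolation (hω : ω ⊆ Icc (-1) 1) (hm : 0 < m)
    (hvol : ENNReal.ofReal m ≤ volume ω) (n : ℕ) {H : ℂ → ℂ} (hδ : ∀ x ∈ ω, ‖H x‖ ≤ δ) :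
    ∃ (S : Finset ℂ) (L : Polynomial ℂ), S.card = n + 1 ∧
      (∀ a ∈ S, ∃ x ∈ ω, (x : ℂ) = a) ∧ (∀ a ∈ S, L.eval a = H a) ∧
      ∀ w : ℂ, ‖w‖ ≤ 1 → ‖L.eval w‖ ≤ Real.exp 1 * (4 * Real.exp 1 / m) ^ n * δ := by
  have hh : 0 < m / (n + 1) := by positivity
  have hnvol : ENNReal.ofReal (n * (m / (n + 1))) < volume ω := by
    refine ((ENNReal.ofReal_lt_ofReal_iff hm).2 ?_).trans_le hvol
    rw [mul_div_assoc', div_lt_iff₀ (by positivity)]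
    linarith
  obtain ⟨x, hxω, hx⟩ := exists_separated_nodes hh.le n ⟨-1, fun y hy ↦ (hω hy).1⟩ hnvol
  have hsep (i : ℕ) (hi : i ≤ n) (j : ℕ) (hj : j ≤ n) :
      |(i : ℝ) - j| * (m / (n + 1)) ≤ ‖(x i : ℂ) - x j‖ := by
    rw [← Complex.ofReal_sub, Complex.norm_real, Real.norm_eq_abs]
    rcases le_total i j with hij | hij
    · rw [abs_sub_comm, abs_of_nonneg (sub_nonneg.2 (by exact_mod_cast hij)), abs_sub_comm]
      exact (hx j hj i hij).trans (le_abs_self _)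
    · rw [abs_of_nonneg (sub_nonneg.2 (by exact_mod_cast hij))]
      exact (hx i hi j hij).trans (le_abs_self _)
  have hinj : InjOn (fun i ↦ (x i : ℂ)) (Finset.range (n + 1)) := by
    intro i hi j hj hij
    rw [Finset.mem_coe, Finset.mem_range_succ_iff] at hi hj
    have h := hsep i hi j hj
    rw [sub_eq_zero.2 hij, norm_zero] at h
    exact_mod_cast sub_eq_zero.1 (abs_eq_zero.1
      (le_antisymm (nonpos_of_mul_nonpos_left h hh) (abs_nonneg _)))
  have hδ0 : 0 ≤ δ := (norm_nonneg _).trans (hδ _ (hxω 0 n.zero_le))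
  refine ⟨(Finset.range (n + 1)).image fun i ↦ (x i : ℂ),
    Lagrange.interpolate (Finset.range (n + 1)) (fun i ↦ (x i : ℂ)) fun i ↦ H (x i),
    by rw [Finset.card_image_of_injOn hinj, Finset.card_range], ?_, ?_, fun w hw ↦ ?_⟩
  · simp only [Finset.forall_mem_image, Finset.mem_range_succ_iff]
    exact fun i hi ↦ ⟨x i, hxω i hi, rfl⟩
  · simp only [Finset.forall_mem_image]
    exact fun i hi ↦ Lagrange.eval_interpolate_at_node _ hinj hi
  · refine (norm_eval_interpolate_le hh (fun i hi ↦ ?_) hsep hw hδ0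
      fun i hi ↦ hδ _ (hxω i hi)).trans ?_
    · rw [Complex.norm_real, Real.norm_eq_abs, abs_le]
      exact hω (hxω i hi)
    · gcongr
      exact four_div_pow_div_factorial_le hm n

theorem norm_le_of_norm_le_on (hρ : ρ < 1) (hσ : σ < 1) (hω : ω ⊆ Icc (-ρ) ρ) (hm : 0 < m)
    (hvol : ENNReal.ofReal m ≤ volume ω) {H : ℂ → ℂ} (hH : DiffContOnCl ℂ H (ball 0 1))
    (hδ : ∀ x ∈ ω, ‖H x‖ ≤ δ) (hB : ∀ w : ℂ, ‖w‖ = 1 → ‖H w‖ ≤ B) {z : ℂ} (hz : ‖z‖ ≤ σ) (n : ℕ) :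
    ‖H z‖ ≤ 2 * Real.exp 1 * (4 * Real.exp 1 / m) ^ n * δ +
      ((ρ + σ) / (1 + ρ * σ)) ^ n * B := by
  obtain ⟨S, L, hcard, hSω, hLH, hL⟩ :=
    exists_interpolation (hω.trans (Icc_subset_Icc (by linarith) hρ.le)) hm hvol n hδ
  set Λ := Real.exp 1 * (4 * Real.exp 1 / m) ^ n * δ
  set q := (ρ + σ) / (1 + ρ * σ)
  obtain ⟨a, ha⟩ := (Finset.card_pos (s := S)).1 (by lia)
  obtain ⟨x, hx, -⟩ := hSω a ha
  have hρ0 : 0 ≤ ρ := by linarith [(hω hx).1, (hω hx).2]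
  have hσ0 : 0 ≤ σ := (norm_nonneg z).trans hz
  have hq0 : 0 ≤ q := by positivity
  have hq1 : q ≤ 1 := (div_le_one (by positivity)).2 (by nlinarith)
  have hB0 : 0 ≤ B := (norm_nonneg _).trans (hB 1 norm_one)
  have hΛ0 : 0 ≤ Λ := (norm_nonneg _).trans (hL 0 (by simp))
  have hremainder : ‖H z - L.eval z‖ ≤ (B + Λ) * q ^ (n + 1) := by
    rw [← hcard]
    refine norm_le_mul_pow_card (G := fun w ↦ H w - L.eval w) hρ hσ
      (hH.sub L.differentiable.diffContOnCl)
      (fun w hw ↦ (norm_sub_le _ _).trans (add_le_add (hB w hw) (hL w hw.le)))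
      (fun a ha ↦ ?_) (fun a ha ↦ sub_eq_zero.2 (hLH a ha).symm) hz
    obtain ⟨x, hx, rfl⟩ := hSω a ha
    rw [Complex.norm_real, Real.norm_eq_abs, abs_le]
    exact hω hx
  calc ‖H z‖ ≤ ‖H z - L.eval z‖ + ‖L.eval z‖ := by
        simpa using norm_add_le (H z - L.eval z) (L.eval z)
    _ ≤ (B + Λ) * q ^ (n + 1) + Λ := add_le_add hremainder (hL z (hz.trans hσ.le))
    _ ≤ B * q ^ n + Λ + Λ := by
        rw [add_mul]
        exact add_le_add_left (add_le_add
          (mul_le_mul_of_nonneg_left (pow_le_pow_of_le_one hq0 hq1 n.le_succ) hB0)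
          (mul_le_of_le_one_right hΛ0 (pow_le_one₀ hq0 hq1))) _
    _ = _ := by ring

theorem exists_diffContOnCl_norm_le {f : ℂ → ℂ} {P R : ℝ} (hP : 0 ≤ P) (hR : 1 < R)
    (hf : ContDiffOn ℝ 1 f (ball 0 R)) (hdf : ContDiffOn ℝ 1 (dbar f) (ball 0 R))
    (hfP : ∀ z ∈ ball (0 : ℂ) R, ‖dbar f z‖ ≤ P * ‖f z‖) {η : ℝ} (hη : 0 < η) :
    ∃ H : ℂ → ℂ, DiffContOnCl ℂ H (ball 0 1) ∧ ∀ w : ℂ, ‖w‖ ≤ 1 →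
      ‖H w‖ ≤ Real.exp (2 * R * P) * ‖f w‖ + η ∧
      ‖f w‖ ≤ Real.exp (2 * R * P) * (‖H w‖ + η) := by
  obtain ⟨r, hr, hrR⟩ := exists_between hR
  obtain ⟨s, H, hH, hsH⟩ := exists_similarity hP hf hdf hfP (by linarith) hrR hη
  refine ⟨H, (hH.mono (closure_ball_subset_closedBall.trans
    (closedBall_subset_ball hr))).diffContOnCl, fun w hw ↦ ?_⟩
  obtain ⟨hs, happrox⟩ := hsH w (mem_ball_zero_iff.2 (hw.trans_lt hr))
  constructor
  · calc ‖H w‖ ≤ ‖Complex.exp (-s w) * f w‖ + ‖H w - Complex.exp (-s w) * f w‖ :=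
          norm_le_norm_add_norm_sub' _ _
      _ ≤ _ := by
          rw [norm_mul]
          gcongr
          exact norm_exp_neg_le hs
  · calc ‖f w‖ = ‖Complex.exp (s w)‖ * ‖Complex.exp (-s w) * f w‖ := by
          rw [← norm_mul, ← mul_assoc, ← Complex.exp_add, add_neg_cancel, Complex.exp_zero, one_mul]
      _ ≤ Real.exp (2 * R * P) * (‖H w‖ + ‖H w - Complex.exp (-s w) * f w‖) := by
          gcongr
          · simpa using norm_exp_neg_le (s := -s w) (by simpa using hs)
          · exact norm_le_norm_add_norm_sub _ _
      _ ≤ _ := by gcongr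

theorem norm_le_of_norm_dbar_le {f : ℂ → ℂ} {P R : ℝ} (hP : 0 ≤ P) (hR : 1 < R)
    (hf : ContDiffOn ℝ 1 f (ball 0 R)) (hdf : ContDiffOn ℝ 1 (dbar f) (ball 0 R))
    (hfP : ∀ z ∈ ball (0 : ℂ) R, ‖dbar f z‖ ≤ P * ‖f z‖) (hρ : ρ < 1) (hσ : σ < 1)
    (hω : ω ⊆ Icc (-ρ) ρ) (hm : 0 < m) (hvol : ENNReal.ofReal m ≤ volume ω)
    (hδ : ∀ x ∈ ω, ‖f x‖ ≤ δ) (hB : ∀ w : ℂ, ‖w‖ = 1 → ‖f w‖ ≤ B) {z : ℂ} (hz : ‖z‖ ≤ σ) (n : ℕ) :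
    ‖f z‖ ≤ Real.exp (2 * R * P) ^ 2 * (2 * Real.exp 1 * (4 * Real.exp 1 / m) ^ n * δ +
      ((ρ + σ) / (1 + ρ * σ)) ^ n * B) := by
  set E := Real.exp (2 * R * P)
  set Λ := 2 * Real.exp 1 * (4 * Real.exp 1 / m) ^ n
  set q := (ρ + σ) / (1 + ρ * σ)
  have happrox : ∀ η > 0, ‖f z‖ ≤ E * (Λ * (E * δ + η) + q ^ n * (E * B + η) + η) := by
    intro η hη
    obtain ⟨H, hH, hfH⟩ := exists_diffContOnCl_norm_le hP hR hf hdf hfP hη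
    have hHle {w : ℂ} (hw : ‖w‖ ≤ 1) {c : ℝ} (hc : ‖f w‖ ≤ c) : ‖H w‖ ≤ E * c + η :=
      (hfH w hw).1.trans (by gcongr)
    have hω1 {x : ℝ} (hx : x ∈ ω) : ‖(x : ℂ)‖ ≤ 1 := by
      rw [Complex.norm_real, Real.norm_eq_abs]
      exact (abs_le.2 (hω hx)).trans hρ.le
    have hHz := norm_le_of_norm_le_on hρ hσ hω hm hvol hH (fun x hx ↦ hHle (hω1 hx) (hδ x hx))
      (fun w hw ↦ hHle hw.le (hB w hw)) hz n
    exact (hfH z (hz.trans hσ.le)).2.trans (by gcongr)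
  have hlim : Filter.Tendsto (fun η ↦ E * (Λ * (E * δ + η) + q ^ n * (E * B + η) + η))
      (nhdsWithin 0 (Ioi 0)) (nhds (E * (Λ * (E * δ + 0) + q ^ n * (E * B + 0) + 0))) :=
    (Continuous.tendsto (by fun_prop) 0).mono_left nhdsWithin_le_nhds
  refine (ge_of_tendsto hlim (eventually_mem_nhdsWithin.mono happrox)).trans_eq ?_
  ring

end Propagation

/-! ### Partial derivatives on the plane -/

/-- The partial derivative `∂ₓ φ` on `ℝ × ℝ`, encoded as a one-variable derivative. -/
noncomputable def partialX (φ : ℝ × ℝ → ℝ) (z : ℝ × ℝ) : ℝ :=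
  deriv (fun s ↦ φ (s, z.2)) z.1

/-- The partial derivative `∂ᵧ φ` on `ℝ × ℝ`, encoded as a one-variable derivative. -/
noncomputable def partialY (φ : ℝ × ℝ → ℝ) (z : ℝ × ℝ) : ℝ :=
  deriv (fun t ↦ φ (z.1, t)) z.2

/-- The Laplacian of a function on `ℝ × ℝ`, as the sum of its pure second partial derivatives. -/
noncomputable def laplacian (φ : ℝ × ℝ → ℝ) (z : ℝ × ℝ) : ℝ :=
  partialX (partialX φ) z + partialY (partialY φ) z

section PartialDerivatives

variable {φ ψ : ℝ × ℝ → ℝ} {z : ℝ × ℝ}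

lemma hasDerivAt_fst_of_differentiable (hφ : Differentiable ℝ φ) (z : ℝ × ℝ) :
    HasDerivAt (fun s ↦ φ (s, z.2)) (partialX φ z) z.1 :=
  (DifferentiableAt.comp z.1 (hφ (z.1, z.2)) (by fun_prop :
    DifferentiableAt ℝ (fun s : ℝ ↦ (s, z.2)) z.1)).hasDerivAt

lemma hasDerivAt_snd_of_differentiable (hφ : Differentiable ℝ φ) (z : ℝ × ℝ) :
    HasDerivAt (fun t ↦ φ (z.1, t)) (partialY φ z) z.2 :=
  (DifferentiableAt.comp z.2 (hφ (z.1, z.2)) (by fun_prop :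
    DifferentiableAt ℝ (fun t : ℝ ↦ (z.1, t)) z.2)).hasDerivAt

lemma partialX_eq_fderiv (hφ : Differentiable ℝ φ) : partialX φ = fun z ↦ fderiv ℝ φ z (1, 0) :=
  funext fun z ↦ ((hφ (z.1, z.2)).hasFDerivAt.comp_hasDerivAt z.1
    ((hasDerivAt_id z.1).prodMk (hasDerivAt_const z.1 z.2))).deriv

lemma partialY_eq_fderiv (hφ : Differentiable ℝ φ) : partialY φ = fun z ↦ fderiv ℝ φ z (0, 1) :=
  funext fun z ↦ ((hφ (z.1, z.2)).hasFDerivAt.comp_hasDerivAt z.2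
    ((hasDerivAt_const z.2 z.1).prodMk (hasDerivAt_id z.2))).deriv

lemma contDiff_partialX {n : WithTop ℕ∞} (hφ : ContDiff ℝ (n + 1) φ) :
    ContDiff ℝ n (partialX φ) := by
  rw [partialX_eq_fderiv (hφ.differentiable (by simp))]
  exact (hφ.fderiv_right le_rfl).clm_apply contDiff_const

lemma contDiff_partialY {n : WithTop ℕ∞} (hφ : ContDiff ℝ (n + 1) φ) :
    ContDiff ℝ n (partialY φ) := by
  rw [partialY_eq_fderiv (hφ.differentiable (by simp))]
  exact (hφ.fderiv_right le_rfl).clm_apply contDiff_const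

lemma partialX_sub (hφ : Differentiable ℝ φ) (hψ : Differentiable ℝ ψ) :
    partialX (fun z ↦ φ z - ψ z) = fun z ↦ partialX φ z - partialX ψ z :=
  funext fun z ↦ ((hasDerivAt_fst_of_differentiable hφ z).sub
    (hasDerivAt_fst_of_differentiable hψ z)).deriv

lemma partialY_sub (hφ : Differentiable ℝ φ) (hψ : Differentiable ℝ ψ) :
    partialY (fun z ↦ φ z - ψ z) = fun z ↦ partialY φ z - partialY ψ z :=
  funext fun z ↦ ((hasDerivAt_snd_of_differentiable hφ z).sub
    (hasDerivAt_snd_of_differentiable hψ z)).deriv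

lemma laplacian_sub (hφ : ContDiff ℝ 2 φ) (hψ : ContDiff ℝ 2 ψ) :
    laplacian (fun z ↦ φ z - ψ z) z = laplacian φ z - laplacian ψ z := by
  rw [← one_add_one_eq_two] at hφ hψ
  have hφ₀ := hφ.differentiable (by simp)
  have hψ₀ := hψ.differentiable (by simp)
  simp only [laplacian, partialX_sub hφ₀ hψ₀, partialY_sub hφ₀ hψ₀,
    partialX_sub ((contDiff_partialX hφ).differentiable one_ne_zero)
      ((contDiff_partialX hψ).differentiable one_ne_zero),
    partialY_sub ((contDiff_partialY hφ).differentiable one_ne_zero)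
      ((contDiff_partialY hψ).differentiable one_ne_zero)]
  ring

lemma partialX_neg : partialX (fun z ↦ -φ z) = fun z ↦ -partialX φ z :=
  funext fun _ ↦ deriv.fun_neg

lemma partialY_neg : partialY (fun z ↦ -φ z) = fun z ↦ -partialY φ z :=
  funext fun _ ↦ deriv.fun_neg

lemma laplacian_neg : laplacian (fun z ↦ -φ z) z = -laplacian φ z := by
  simp only [laplacian, partialX_neg, partialY_neg]
  ring

lemma partialX_comp_add_right (c : ℝ × ℝ) :
    partialX (fun z ↦ φ (z + c)) = fun z ↦ partialX φ (z + c) :=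
  funext fun z ↦ deriv_comp_add_const (fun s ↦ φ (s, z.2 + c.2)) c.1 z.1

lemma partialY_comp_add_right (c : ℝ × ℝ) :
    partialY (fun z ↦ φ (z + c)) = fun z ↦ partialY φ (z + c) :=
  funext fun z ↦ deriv_comp_add_const (fun t ↦ φ (z.1 + c.1, t)) c.2 z.2

lemma laplacian_comp_add_right (c : ℝ × ℝ) :
    laplacian (fun z ↦ φ (z + c)) z = laplacian φ (z + c) := by
  simp only [laplacian, partialX_comp_add_right, partialY_comp_add_right]

lemma partialX_comp_neg_fst :
    partialX (fun z ↦ φ (-z.1, z.2)) = fun z ↦ -partialX φ (-z.1, z.2) :=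
  funext fun z ↦ deriv_comp_neg (fun s ↦ φ (s, z.2)) z.1

lemma laplacian_comp_neg_fst :
    laplacian (fun z ↦ φ (-z.1, z.2)) z = laplacian φ (-z.1, z.2) := by
  have hY (ψ : ℝ × ℝ → ℝ) :
      partialY (fun z ↦ ψ (-z.1, z.2)) = fun z ↦ partialY ψ (-z.1, z.2) := rfl
  simp only [laplacian, partialX_comp_neg_fst, partialX_neg, hY, neg_neg]

lemma hasDerivAt_intervalIntegral_fst (hφ : ContDiff ℝ 1 φ) (x y : ℝ) :
    HasDerivAt (fun s ↦ ∫ t in (0 : ℝ)..y, φ (s, t)) (∫ t in (0 : ℝ)..y, partialX φ (x, t)) x := by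
  have hc : Continuous (partialX φ) := (contDiff_partialX (n := 0) (by simpa using hφ)).continuous
  have hφc := hφ.continuous
  obtain ⟨K, hK⟩ := ((isCompact_closedBall x 1).prod
    (isCompact_uIcc (a := (0 : ℝ)) (b := y))).exists_bound_of_continuousOn hc.continuousOn
  refine (intervalIntegral.hasDerivAt_integral_of_dominated_loc_of_deriv_le
    (F' := fun s t ↦ partialX φ (s, t)) (bound := fun _ ↦ K) (closedBall_mem_nhds x one_pos)
    (.of_forall fun s ↦ (by fun_prop : Continuous fun t ↦ φ (s, t)).aestronglyMeasurable)
    ((by fun_prop : Continuous fun t ↦ φ (x, t)).intervalIntegrable _ _)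
    (by fun_prop : Continuous fun t ↦ partialX φ (x, t)).aestronglyMeasurable
    (.of_forall fun t ht s hs ↦ hK (s, t) ⟨hs, uIoc_subset_uIcc ht⟩)
    intervalIntegrable_const (.of_forall fun t _ s _ ↦ ?_)).2
  exact hasDerivAt_fst_of_differentiable (hφ.differentiable one_ne_zero) (s, t)

lemma hasFDerivAt_of_hasDerivAt_prodMk {φ₁ φ₂ : ℝ × ℝ → ℝ} {U : Set (ℝ × ℝ)} (hU : IsOpen U)
    (h₁ : ∀ u ∈ U, HasDerivAt (fun s ↦ φ (s, u.2)) (φ₁ u) u.1)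
    (h₂ : ∀ u ∈ U, HasDerivAt (fun t ↦ φ (u.1, t)) (φ₂ u) u.2)
    (hφ₁ : ContinuousOn φ₁ U) (hφ₂ : ContinuousOn φ₂ U) (hz : z ∈ U) :
    HasFDerivAt φ
      (φ₁ z • ContinuousLinearMap.fst ℝ ℝ ℝ + φ₂ z • ContinuousLinearMap.snd ℝ ℝ ℝ) z := by
  have hUz := hU.mem_nhds hz
  have hspan := (ContinuousLinearMap.toSpanSingletonCLE (𝕜 := ℝ) (E := ℝ)).continuous
  have h := (hasStrictFDerivAt_uncurry_coprod (𝕜 := ℝ) (u := z) (f := fun a b ↦ φ (a, b))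
    (f₁ := fun a b ↦ ContinuousLinearMap.toSpanSingleton ℝ (φ₁ (a, b)))
    (f₂ := fun a b ↦ ContinuousLinearMap.toSpanSingleton ℝ (φ₂ (a, b)))
    (Filter.mem_of_superset hUz fun u hu ↦ (h₁ u hu).hasFDerivAt)
    (Filter.mem_of_superset hUz fun u hu ↦ (h₂ u hu).hasFDerivAt)
    (hspan.continuousAt.comp (hφ₁.continuousAt hUz))
    (hspan.continuousAt.comp (hφ₂.continuousAt hUz))).hasFDerivAt
  refine HasFDerivAt.congr_fderiv (f := φ) h ?_
  ext <;> simp [Function.HasUncurry.uncurry]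

lemma contDiffOn_one_of_hasDerivAt_prodMk {φ₁ φ₂ : ℝ × ℝ → ℝ} {U : Set (ℝ × ℝ)} (hU : IsOpen U)
    (h₁ : ∀ u ∈ U, HasDerivAt (fun s ↦ φ (s, u.2)) (φ₁ u) u.1)
    (h₂ : ∀ u ∈ U, HasDerivAt (fun t ↦ φ (u.1, t)) (φ₂ u) u.2)
    (hφ₁ : ContinuousOn φ₁ U) (hφ₂ : ContinuousOn φ₂ U) : ContDiffOn ℝ 1 φ U := by
  rw [← zero_add (1 : WithTop ℕ∞),
    contDiffOn_succ_iff_hasFDerivWithinAt_of_uniqueDiffOn hU.uniqueDiffOn]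
  refine ⟨by simp, _, ?_, fun z hz ↦ (hasFDerivAt_of_hasDerivAt_prodMk hU h₁ h₂ hφ₁ hφ₂
    hz).hasFDerivWithinAt⟩
  rw [contDiffOn_zero]
  fun_prop

end PartialDerivatives

/-! ### An interior gradient estimate -/

lemma deriv_deriv_nonpos_of_isLocalMax {h : ℝ → ℝ} {a : ℝ} (ha : IsLocalMax h a)
    (hc : ContinuousAt h a) : deriv (deriv h) a ≤ 0 := by
  by_contra! hpos
  have hmin : IsLocalMin h a := isLocalMin_of_deriv_deriv_pos hpos ha.deriv_eq_zero hc
  have heq : h =ᶠ[nhds a] fun _ ↦ h a := by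
    filter_upwards [ha, hmin] with x h₁ h₂ using le_antisymm h₁ h₂
  have hzero : deriv (deriv h) a = 0 := by simpa using heq.deriv.deriv_eq
  exact hpos.ne' hzero

lemma laplacian_nonpos_of_isLocalMax {k : ℝ × ℝ → ℝ} {z : ℝ × ℝ} (hz : IsLocalMax k z)
    (hc : ContinuousAt k z) : laplacian k z ≤ 0 := by
  have hx : ContinuousAt (fun s ↦ (s, z.2)) z.1 := by fun_prop
  have hy : ContinuousAt (fun t ↦ (z.1, t)) z.2 := by fun_prop
  have hzx : IsLocalMax (fun s ↦ k (s, z.2)) z.1 :=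
    IsMaxFilter.comp_tendsto (g := fun s ↦ (s, z.2)) (b := z.1) hz hx
  have hzy : IsLocalMax (fun t ↦ k (z.1, t)) z.2 :=
    IsMaxFilter.comp_tendsto (g := fun t ↦ (z.1, t)) (b := z.2) hz hy
  exact add_nonpos (deriv_deriv_nonpos_of_isLocalMax hzx (ContinuousAt.comp hc hx))
    (deriv_deriv_nonpos_of_isLocalMax hzy (ContinuousAt.comp hc hy))

theorem nonpos_of_laplacian_pos {K : Set (ℝ × ℝ)} (hK : IsCompact K) {k : ℝ × ℝ → ℝ}
    (hk : ContinuousOn k K) (hlap : ∀ z ∈ interior K, 0 < laplacian k z)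
    (hfr : ∀ z ∈ frontier K, k z ≤ 0) {z : ℝ × ℝ} (hz : z ∈ K) : k z ≤ 0 := by
  obtain ⟨w, hw, hmax⟩ := hK.exists_isMaxOn ⟨z, hz⟩ hk
  refine (hmax hz).trans (hfr w ⟨subset_closure hw, fun hwi ↦ ?_⟩)
  have hwK : K ∈ nhds w := mem_interior_iff_mem_nhds.1 hwi
  exact (hlap w hwi).not_ge (laplacian_nonpos_of_isLocalMax (hmax.isLocalMax hwK)
    (hk.continuousAt hwK))

lemma nonpos_of_hasDerivAt_of_nonpos {g : ℝ → ℝ} {g' r : ℝ} (hr : 0 < r) (hg : HasDerivAt g g' 0)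
    (h0 : g 0 = 0) (hnonpos : ∀ s ∈ Icc 0 r, g s ≤ 0) : g' ≤ 0 := by
  have hmax : IsLocalMaxOn g (Icc 0 r) 0 :=
    eventually_mem_nhdsWithin.mono fun s hs ↦ (hnonpos s hs).trans_eq h0.symm
  have h := hmax.hasFDerivWithinAt_nonpos hg.hasFDerivAt.hasFDerivWithinAt
    (mem_posTangentConeAt_of_segment_subset (y := r) (by rw [zero_add, segment_eq_Icc hr.le]))
  exact nonpos_of_mul_nonpos_right (by simpa using h) hr

/-- The comparison function on the half square `[0, r] × [-r, r]`: it has Laplacian `-N`, is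
nonnegative on the half square, and is at least `B` on its sides other than `{0} × [-r, r]`. -/
noncomputable def barrier (B N r : ℝ) (z : ℝ × ℝ) : ℝ :=
  B / r ^ 2 * (z.2 ^ 2 + z.1 * (2 * r - z.1)) + N / 2 * (z.1 * (r - z.1))

section Barrier

variable {B N r : ℝ} {z : ℝ × ℝ}

lemma contDiff_barrier {n : WithTop ℕ∞} : ContDiff ℝ n (barrier B N r) := by
  unfold barrier
  fun_prop

lemma partialX_barrier (B N r : ℝ) : partialX (barrier B N r) =
    fun z ↦ B / r ^ 2 * (2 * (r - z.1)) + N / 2 * (r - 2 * z.1) := by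
  ext z
  have hmul (c : ℝ) : HasDerivAt (fun s ↦ s * (c - s)) (c - 2 * z.1) z.1 :=
    ((hasDerivAt_id z.1).mul ((hasDerivAt_id z.1).const_sub c)).congr_deriv
      (by simp only [id_eq]; ring)
  have h := (((hmul (2 * r)).const_add (z.2 ^ 2)).const_mul (B / r ^ 2)).add
    ((hmul r).const_mul (N / 2))
  exact (h.congr_deriv (by ring)).deriv

lemma laplacian_barrier : laplacian (barrier B N r) z = -N := by
  have hX : HasDerivAt (fun s ↦ B / r ^ 2 * (2 * (r - s)) + N / 2 * (r - 2 * s))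
      (-(2 * (B / r ^ 2)) - N) z.1 :=
    (((((hasDerivAt_id z.1).const_sub r).const_mul 2).const_mul _).add
      ((((hasDerivAt_id z.1).const_mul 2).const_sub r).const_mul _)).congr_deriv (by ring)
  have hY : partialY (barrier B N r) = fun z ↦ B / r ^ 2 * (2 * z.2) := by
    ext z
    have h := (((hasDerivAt_pow 2 z.2).add_const (z.1 * (2 * r - z.1))).const_mul
      (B / r ^ 2)).add_const (N / 2 * (z.1 * (r - z.1)))
    exact (h.congr_deriv (by simp)).deriv
  have hYY : HasDerivAt (fun t ↦ B / r ^ 2 * (2 * t)) (2 * (B / r ^ 2)) z.2 :=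
    (((hasDerivAt_id z.2).const_mul 2).const_mul _).congr_deriv (by ring)
  rw [laplacian, partialX_barrier, hY]
  change deriv _ _ + deriv _ _ = _
  rw [hX.deriv, hYY.deriv]
  ring

lemma le_barrier_of_mem_frontier (hB : 0 ≤ B) (hN : 0 ≤ N) (hr : 0 < r) {w : ℝ × ℝ → ℝ}
    (hwB : ∀ z ∈ Icc 0 r ×ˢ Icc (-r) r, w z ≤ B) (hw0 : ∀ y, w (0, y) = 0)
    (hz : z ∈ frontier (Icc 0 r ×ˢ Icc (-r) r)) : w z ≤ barrier B N r z := by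
  have hzK : z ∈ Icc 0 r ×ˢ Icc (-r) r := (isClosed_Icc.prod isClosed_Icc).frontier_subset hz
  rw [frontier_prod_eq, frontier_Icc hr.le, frontier_Icc (by linarith)] at hz
  obtain ⟨x, y⟩ := z
  obtain ⟨⟨hx0 : 0 ≤ x, hxr : x ≤ r⟩, -⟩ := id hzK
  have hxx : 0 ≤ x * (2 * r - x) := mul_nonneg hx0 (by linarith)
  have hN' : 0 ≤ N / 2 * (x * (r - x)) :=
    mul_nonneg (by positivity) (mul_nonneg hx0 (sub_nonneg.2 hxr))
  by_cases hx : x = 0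
  · rw [hx, hw0, barrier]
    simp only [zero_mul, mul_zero, add_zero]
    positivity
  suffices r ^ 2 ≤ y ^ 2 + x * (2 * r - x) by
    calc w (x, y) ≤ B / r ^ 2 * r ^ 2 := by
          rw [div_mul_cancel₀ _ (by positivity)]
          exact hwB _ hzK
      _ ≤ B / r ^ 2 * (y ^ 2 + x * (2 * r - x)) := by gcongr
      _ ≤ _ := le_add_of_nonneg_right hN'
  rcases hz with ⟨-, rfl | rfl⟩ | ⟨hx' | rfl, -⟩
  · linarith [neg_sq r]
  · linarith
  · exact (hx hx').elim
  · nlinarith [sq_nonneg y]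

lemma partialX_le_of_neg_lt_laplacian (hB : 0 ≤ B) (hN : 0 ≤ N) (hr : 0 < r) {w : ℝ × ℝ → ℝ}
    (hw : ContDiff ℝ 2 w) (hwB : ∀ z ∈ Icc 0 r ×ˢ Icc (-r) r, w z ≤ B) (hw0 : ∀ y, w (0, y) = 0)
    (hlap : ∀ z ∈ Icc 0 r ×ˢ Icc (-r) r, -N < laplacian w z) :
    partialX w 0 ≤ 2 * B / r + N * r / 2 := by
  have hle {z : ℝ × ℝ} (hz : z ∈ Icc 0 r ×ˢ Icc (-r) r) : w z - barrier B N r z ≤ 0 := by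
    refine nonpos_of_laplacian_pos (k := fun z ↦ w z - barrier B N r z)
      (isCompact_Icc.prod isCompact_Icc) (hw.sub contDiff_barrier).continuous.continuousOn
      (fun z hz ↦ ?_) (fun z hz ↦ ?_) hz
    · rw [laplacian_sub hw contDiff_barrier, laplacian_barrier, sub_pos]
      exact hlap z (interior_subset hz)
    · exact sub_nonpos.2 (le_barrier_of_mem_frontier hB hN hr hwB hw0 hz)
  have hderiv := nonpos_of_hasDerivAt_of_nonpos hr
    ((hasDerivAt_fst_of_differentiable (hw.differentiable two_ne_zero) 0).sub
      (hasDerivAt_fst_of_differentiable (contDiff_barrier.differentiable one_ne_zero) 0))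
    (by simp [hw0, barrier])
    (fun s hs ↦ hle (z := (s, 0)) ⟨hs, by simp [hr.le]⟩)
  calc partialX w 0 ≤ partialX (barrier B N r) 0 := sub_nonpos.1 hderiv
    _ = _ := by
      rw [partialX_barrier]
      simp only [Prod.fst_zero]
      field_simp
      ring

end Barrier

section GradientEstimate

variable {φ : ℝ × ℝ → ℝ} {B N r : ℝ}

lemma partialX_zero_le (hB : 0 ≤ B) (hN : 0 ≤ N) (hr : 0 < r) (hφ : ContDiff ℝ 2 φ)
    (hφB : ∀ z ∈ Icc (-r) r ×ˢ Icc (-r) r, |φ z| ≤ B)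
    (hlap : ∀ z ∈ Icc (-r) r ×ˢ Icc (-r) r, |laplacian φ z| < N) :
    partialX φ 0 ≤ 2 * B / r + N * r / 2 := by
  set ψ : ℝ × ℝ → ℝ := fun z ↦ φ (-z.1, z.2)
  have hψ : ContDiff ℝ 2 ψ := by fun_prop
  have hmem {z : ℝ × ℝ} (hz : z ∈ Icc 0 r ×ˢ Icc (-r) r) :
      z ∈ Icc (-r) r ×ˢ Icc (-r) r ∧ (-z.1, z.2) ∈ Icc (-r) r ×ˢ Icc (-r) r := by
    simp only [mem_prod, mem_Icc] at hz ⊢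
    grind
  have hodd := partialX_le_of_neg_lt_laplacian (w := fun z ↦ φ z - ψ z) (B := 2 * B) (N := 2 * N)
    (by positivity) (by positivity) hr (hφ.sub hψ)
    (fun z hz ↦ by
      have h₁ := abs_le.1 (hφB _ (hmem hz).1)
      have h₂ := abs_le.1 (hφB _ (hmem hz).2)
      linarith [h₁.2, h₂.1])
    (fun y ↦ by simp [ψ])
    (fun z hz ↦ by
      have h₁ := abs_lt.1 (hlap _ (hmem hz).1)
      have h₂ := abs_lt.1 (hlap _ (hmem hz).2)
      rw [laplacian_sub hφ hψ, laplacian_comp_neg_fst]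
      linarith [h₁.1, h₂.2])
  have hdouble : partialX (fun z ↦ φ z - ψ z) 0 = 2 * partialX φ 0 := by
    rw [partialX_sub (hφ.differentiable two_ne_zero) (hψ.differentiable two_ne_zero),
      partialX_comp_neg_fst]
    simp only [Prod.fst_zero, Prod.snd_zero, neg_zero]
    rw [← Prod.zero_eq_mk]
    ring
  rw [hdouble] at hodd
  linarith [show 2 * (2 * B) / r + 2 * N * r / 2 = 2 * (2 * B / r + N * r / 2) by ring]

theorem abs_partialX_le (hr : 0 < r) (hφ : ContDiff ℝ 2 φ) (c : ℝ × ℝ)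
    (hφB : ∀ z ∈ Icc (-r) r ×ˢ Icc (-r) r, |φ (z + c)| ≤ B)
    (hlap : ∀ z ∈ Icc (-r) r ×ˢ Icc (-r) r, |laplacian φ (z + c)| ≤ N) :
    |partialX φ c| ≤ 2 * B / r + N * r / 2 := by
  have h0 : (0 : ℝ × ℝ) ∈ Icc (-r) r ×ˢ Icc (-r) r := by
    simp [Prod.le_def, hr.le]
  have hB : 0 ≤ B := (abs_nonneg _).trans (hφB 0 h0)
  have hN : 0 ≤ N := (abs_nonneg _).trans (hlap 0 h0)
  have hψ : ContDiff ℝ 2 fun z ↦ φ (z + c) := by fun_prop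
  have hc : partialX (fun z ↦ φ (z + c)) 0 = partialX φ c := by
    simp only [partialX_comp_add_right, zero_add]
  refine le_of_forall_pos_le_add fun ε hε ↦ ?_
  have hlt : N < N + 2 * ε / r := lt_add_of_pos_right N (by positivity)
  have hbound : 2 * B / r + (N + 2 * ε / r) * r / 2 = 2 * B / r + N * r / 2 + ε := by
    field_simp
    ring
  rw [abs_le', ← hbound, ← hc]
  refine ⟨partialX_zero_le hB (hN.trans hlt.le) hr hψ hφB fun z hz ↦ ?_, ?_⟩
  · rw [laplacian_comp_add_right]
    exact (hlap z hz).trans_lt hlt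
  · have hneg := partialX_zero_le hB (hN.trans hlt.le) hr hψ.neg
      (fun z hz ↦ (abs_neg _).trans_le (hφB z hz)) fun z hz ↦ by
        rw [laplacian_neg, abs_neg, laplacian_comp_add_right]
        exact (hlap z hz).trans_lt hlt
    rwa [partialX_neg] at hneg

end GradientEstimate

/-! ### The Riccati equation -/

lemma exists_hasDerivWithinAt_of_lipschitzWith {E : Type*} [NormedAddCommGroup E] [NormedSpace ℝ E]
    [CompleteSpace E] {v : ℝ → E → E} {a b : ℝ} (hab : a ≤ b) {K L : NNReal}
    (hlip : ∀ t ∈ Icc a b, LipschitzWith K (v t)) (hcont : ∀ x, ContinuousOn (v · x) (Icc a b))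
    (hbound : ∀ t ∈ Icc a b, ∀ x, ‖v t x‖ ≤ L) (x₀ : E) :
    ∃ γ : ℝ → E, γ a = x₀ ∧ ∀ t ∈ Icc a b, HasDerivWithinAt γ (v t (γ t)) (Icc a b) t := by
  refine IsPicardLindelof.exists_eq_forall_mem_Icc_hasDerivWithinAt₀ (f := v) (K := K) (L := L)
    (a := L * (b - a).toNNReal) (t₀ := ⟨a, left_mem_Icc.2 hab⟩)
    ⟨fun t ht ↦ (hlip t ht).lipschitzOnWith, fun x _ ↦ hcont x, fun t ht x _ ↦ hbound t ht x, ?_⟩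
  simp [hab]

section Riccati

variable {V p : ℝ → ℝ} {M a b : ℝ}

lemma exists_hasDerivWithinAt_sub_projIcc_sq (hV : ContinuousOn V (Icc a b)) (hab : a ≤ b)
    (hV0 : ∀ t ∈ Icc a b, 0 ≤ V t) (hVM : ∀ t ∈ Icc a b, V t ≤ M) {A : ℝ} (hA : 0 ≤ A) (x₀ : ℝ) :
    ∃ p : ℝ → ℝ, p a = x₀ ∧
      ∀ t ∈ Icc a b, HasDerivWithinAt p (V t - projIcc 0 A hA (p t) ^ 2) (Icc a b) t := by
  have hM : 0 ≤ M := (hV0 a (left_mem_Icc.2 hab)).trans (hVM a (left_mem_Icc.2 hab))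
  refine exists_hasDerivWithinAt_of_lipschitzWith hab (v := fun t x ↦ V t - projIcc 0 A hA x ^ 2)
    (K := (2 * A).toNNReal) (L := (M + A ^ 2).toNNReal) (fun t _ ↦ ?_) (fun x ↦ by fun_prop)
    (fun t ht x ↦ ?_) x₀
  · refine LipschitzWith.of_dist_le_mul fun x y ↦ ?_
    obtain ⟨hx0, hxA⟩ := (projIcc 0 A hA x).2
    obtain ⟨hy0, hyA⟩ := (projIcc 0 A hA y).2
    have hproj : |(projIcc 0 A hA x : ℝ) - projIcc 0 A hA y| ≤ |x - y| := by
      simpa [Subtype.dist_eq, Real.dist_eq] using (LipschitzWith.projIcc hA).dist_le_mul x y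
    rw [Real.coe_toNNReal _ (by positivity), dist_sub_left, Real.dist_eq, Real.dist_eq, sq_sub_sq,
      abs_mul, abs_of_nonneg (add_nonneg hx0 hy0)]
    gcongr
    linarith
  · obtain ⟨hx0, hxA⟩ := (projIcc 0 A hA x).2
    have hsq : (projIcc 0 A hA x : ℝ) ^ 2 ≤ A ^ 2 := pow_le_pow_left₀ hx0 hxA 2
    rw [Real.coe_toNNReal _ (by positivity), Real.norm_eq_abs, abs_le]
    constructor <;>
      linarith [hV0 t ht, hVM t ht, sq_nonneg (projIcc 0 A hA x : ℝ)]

-- `p = u' / u` for a positive solution of `u'' = V u`.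
theorem exists_hasDerivAt_riccati (hV : ContinuousOn V (Icc a b)) (hab : a ≤ b)
    (hV0 : ∀ t ∈ Icc a b, 0 ≤ V t) (hVM : ∀ t ∈ Icc a b, V t ≤ M) :
    ∃ p : ℝ → ℝ, ∀ t ∈ Ioo a b, HasDerivAt p (V t - p t ^ 2) t ∧ p t ∈ Icc 0 (M + 1) := by
  have hM : 0 ≤ M := (hV0 a (left_mem_Icc.2 hab)).trans (hVM a (left_mem_Icc.2 hab))
  have hA : 0 ≤ M + 1 := by linarith
  obtain ⟨p, hpa, hp⟩ := exists_hasDerivWithinAt_sub_projIcc_sq hV hab hV0 hVM hA 1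
  have hpc : ContinuousOn p (Icc a b) := fun t ht ↦ (hp t ht).continuousWithinAt
  have hpr (t : ℝ) (ht : t ∈ Ico a b) :
      HasDerivWithinAt p (V t - projIcc 0 (M + 1) hA (p t) ^ 2) (Ici t) t :=
    ((hp t (Ico_subset_Icc_self ht)).mono (Icc_subset_Icc_left ht.1)).mono_of_mem_nhdsWithin
      (Icc_mem_nhdsGE ht.2)
  have hlower : ∀ t ∈ Icc a b, -p t ≤ -Real.exp (-2 * (t - a)) := by
    refine image_le_of_deriv_right_lt_deriv_boundary (f := fun t ↦ -p t) hpc.neg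
      (fun t ht ↦ (hpr t ht).neg) (B' := fun t ↦ 2 * Real.exp (-2 * (t - a))) (by simp [hpa])
      (fun t ↦ ?_) (fun t ht hpt ↦ ?_)
    · refine ((((hasDerivAt_id t).sub_const a).const_mul (-2)).exp.neg).congr_deriv ?_
      simp only [id]
      ring
    · have hle : Real.exp (-2 * (t - a)) ≤ 1 := Real.exp_le_one_iff.2 (by linarith [ht.1])
      have hpos := Real.exp_pos (-2 * (t - a))
      rw [neg_inj.1 hpt, projIcc_of_mem hA ⟨hpos.le, by linarith⟩]
      nlinarith [hV0 t (Ico_subset_Icc_self ht)]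
  have hupper : ∀ t ∈ Icc a b, p t ≤ M + 1 := by
    refine image_le_of_deriv_right_lt_deriv_boundary hpc hpr (B' := fun _ ↦ 0) (by simp [hpa, hM])
      (fun t ↦ hasDerivAt_const t _) (fun t ht hpt ↦ ?_)
    rw [hpt, projIcc_right]
    nlinarith [hVM t (Ico_subset_Icc_self ht)]
  refine ⟨p, fun t ht ↦ ?_⟩
  have htI := Ioo_subset_Icc_self ht
  have hpt : p t ∈ Icc 0 (M + 1) :=
    ⟨by linarith [hlower t htI, Real.exp_pos (-2 * (t - a))], hupper t htI⟩
  have hderiv := (hp t htI).hasDerivAt (Icc_mem_nhds ht.1 ht.2)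
  rw [projIcc_of_mem hA hpt] at hderiv
  exact ⟨hderiv, hpt⟩

lemma contDiffOn_one_of_riccati (hV : ContinuousOn V (Ioo a b))
    (hp : ∀ t ∈ Ioo a b, HasDerivAt p (V t - p t ^ 2) t) : ContDiffOn ℝ 1 p (Ioo a b) := by
  have hpd : DifferentiableOn ℝ p (Ioo a b) :=
    fun t ht ↦ (hp t ht).differentiableAt.differentiableWithinAt
  refine (contDiffOn_one_iff_derivWithin isOpen_Ioo.uniqueDiffOn).2
    ⟨hpd, (hV.sub (hpd.continuousOn.pow 2)).congr fun t ht ↦ ?_⟩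
  exact (hp t ht).hasDerivWithinAt.derivWithin (isOpen_Ioo.uniqueDiffOn t ht)

end Riccati

/-! ### The analytic completion of a solution -/

/-- Classical solutions on the plane of `-Δφ + V(x) φ = 0` with `∂ᵧφ = 0` on `{y = 0}`. -/
structure IsNeumannSolution (V : ℝ → ℝ) (φ : ℝ × ℝ → ℝ) : Prop where
  contDiff : ContDiff ℝ 2 φ
  laplacian_eq : ∀ z, laplacian φ z = V z.1 * φ z
  partialY_eq_zero : ∀ x, partialY φ (x, 0) = 0

/-- The function `ψ` conjugate to `φ`. If `p = u' / u`, then `u ψ` is the stream function, zero on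
`{y = 0}`, of the vector field `u² ∇(φ / u)`; only `p` is needed to write `ψ` down. -/
noncomputable def streamFunction (p : ℝ → ℝ) (φ : ℝ × ℝ → ℝ) (z : ℝ × ℝ) : ℝ :=
  ∫ t in (0 : ℝ)..z.2, (partialX φ (z.1, t) - p z.1 * φ (z.1, t))

/-- The function `φ + i ψ` on `ℂ`, with `ψ` conjugate to `φ`; it plays the role of an analytic
completion of `φ`. -/
noncomputable def completion (p : ℝ → ℝ) (φ : ℝ × ℝ → ℝ) (z : ℂ) : ℂ :=
  φ (z.re, z.im) + I * streamFunction p φ (z.re, z.im)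

section StreamFunction

variable {V p : ℝ → ℝ} {φ : ℝ × ℝ → ℝ}

lemma IsNeumannSolution.comp_add_right (hφ : IsNeumannSolution V φ) (c : ℝ) :
    IsNeumannSolution (fun x ↦ V (x + c)) (fun z ↦ φ (z + (c, 0))) where
  contDiff := hφ.contDiff.comp (contDiff_id.add contDiff_const)
  laplacian_eq z := by rw [laplacian_comp_add_right, hφ.laplacian_eq, Prod.fst_add]
  partialY_eq_zero x := by
    simp only [partialY_comp_add_right, Prod.mk_add_mk, add_zero, hφ.partialY_eq_zero]

lemma IsNeumannSolution.contDiff_partialX (hφ : IsNeumannSolution V φ) :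
    ContDiff ℝ 1 (partialX φ) :=
  NeumannPropagation.contDiff_partialX (by simpa [one_add_one_eq_two] using hφ.contDiff)

lemma IsNeumannSolution.contDiff_partialY (hφ : IsNeumannSolution V φ) :
    ContDiff ℝ 1 (partialY φ) :=
  NeumannPropagation.contDiff_partialY (by simpa [one_add_one_eq_two] using hφ.contDiff)

lemma IsNeumannSolution.integral_partialX_partialX (hφ : IsNeumannSolution V φ) (x y : ℝ) :
    ∫ t in (0 : ℝ)..y, partialX (partialX φ) (x, t) =
      V x * (∫ t in (0 : ℝ)..y, φ (x, t)) - partialY φ (x, y) := by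
  have hc : Continuous φ := hφ.contDiff.continuous
  have hcyy : Continuous (partialY (partialY φ)) :=
    (NeumannPropagation.contDiff_partialY (n := 0) (by simpa using hφ.contDiff_partialY)).continuous
  have heq (t : ℝ) :
      partialX (partialX φ) (x, t) = V x * φ (x, t) - partialY (partialY φ) (x, t) :=
    eq_sub_of_add_eq (hφ.laplacian_eq (x, t))
  have hyy : ∫ t in (0 : ℝ)..y, partialY (partialY φ) (x, t) = partialY φ (x, y) := by
    rw [intervalIntegral.integral_eq_sub_of_hasDerivAt (f := fun t ↦ partialY φ (x, t))
      (fun t _ ↦ hasDerivAt_snd_of_differentiable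
        (hφ.contDiff_partialY.differentiable one_ne_zero) (x, t))
      (Continuous.intervalIntegrable (by fun_prop) _ _), hφ.partialY_eq_zero, sub_zero]
  simp only [heq]
  rw [intervalIntegral.integral_sub (Continuous.intervalIntegrable (by fun_prop) _ _)
    (Continuous.intervalIntegrable (by fun_prop) _ _), intervalIntegral.integral_const_mul, hyy]

lemma streamFunction_eq_sub (hφ : Continuous φ) (hφx : Continuous (partialX φ)) (z : ℝ × ℝ) :
    streamFunction p φ z =
      (∫ t in (0 : ℝ)..z.2, partialX φ (z.1, t)) - p z.1 * ∫ t in (0 : ℝ)..z.2, φ (z.1, t) := by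
  rw [streamFunction, intervalIntegral.integral_sub, intervalIntegral.integral_const_mul] <;>
    exact Continuous.intervalIntegrable (by fun_prop) _ _

lemma streamFunction_zero_right (x : ℝ) : streamFunction p φ (x, 0) = 0 :=
  intervalIntegral.integral_same

lemma abs_streamFunction_le {z : ℝ × ℝ} {B G P : ℝ} (hP : |p z.1| ≤ P)
    (hφ : ∀ t, |t| ≤ |z.2| → |φ (z.1, t)| ≤ B)
    (hφx : ∀ t, |t| ≤ |z.2| → |partialX φ (z.1, t)| ≤ G) :
    |streamFunction p φ z| ≤ (G + P * B) * |z.2| := by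
  have h : ∀ t ∈ uIoc 0 z.2, ‖partialX φ (z.1, t) - p z.1 * φ (z.1, t)‖ ≤ G + P * B := by
    intro t ht
    have htz : |t| ≤ |z.2| := by
      simpa only [sub_zero] using abs_sub_left_of_mem_uIcc (uIoc_subset_uIcc ht)
    rw [Real.norm_eq_abs]
    refine (abs_sub _ _).trans (add_le_add (hφx t htz) ?_)
    rw [abs_mul]
    exact mul_le_mul hP (hφ t htz) (abs_nonneg _) ((abs_nonneg _).trans hP)
  simpa only [sub_zero, Real.norm_eq_abs, streamFunction] using
    intervalIntegral.norm_integral_le_of_norm_le_const h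

lemma hasDerivAt_snd_streamFunction (hφ : Continuous φ) (hφx : Continuous (partialX φ))
    (z : ℝ × ℝ) :
    HasDerivAt (fun t ↦ streamFunction p φ (z.1, t)) (partialX φ z - p z.1 * φ z) z.2 :=
  have hc : Continuous fun t ↦ partialX φ (z.1, t) - p z.1 * φ (z.1, t) := by fun_prop
  (hc.integral_hasStrictDerivAt 0 z.2).hasDerivAt

lemma IsNeumannSolution.hasDerivAt_fst_streamFunction (hφ : IsNeumannSolution V φ) {z : ℝ × ℝ}
    (hp : HasDerivAt p (V z.1 - p z.1 ^ 2) z.1) :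
    HasDerivAt (fun s ↦ streamFunction p φ (s, z.2))
      (-partialY φ z - p z.1 * streamFunction p φ z) z.1 := by
  have hφx := hφ.contDiff_partialX
  simp only [streamFunction_eq_sub hφ.contDiff.continuous hφx.continuous]
  refine ((hasDerivAt_intervalIntegral_fst hφx z.1 z.2).sub (hp.mul
    (hasDerivAt_intervalIntegral_fst (hφ.contDiff.of_le one_le_two) z.1 z.2))).congr_deriv ?_
  rw [hφ.integral_partialX_partialX]
  ring

lemma continuousOn_streamFunction {U : Set (ℝ × ℝ)} (hφ : Continuous φ)
    (hφx : Continuous (partialX φ)) (hp : ContinuousOn (fun z : ℝ × ℝ ↦ p z.1) U) :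
    ContinuousOn (streamFunction p φ) U := by
  simp only [funext (streamFunction_eq_sub (p := p) hφ hφx)]
  exact (intervalIntegral.continuous_parametric_primitive_of_continuous
    (f := fun x t ↦ partialX φ (x, t)) hφx).continuousOn.sub (hp.mul
    (intervalIntegral.continuous_parametric_primitive_of_continuous
      (f := fun x t ↦ φ (x, t)) hφ).continuousOn)

end StreamFunction

section Completion

variable {V p : ℝ → ℝ} {φ : ℝ × ℝ → ℝ} {R : ℝ}

lemma dbar_ofReal_add_I_mul_ofReal {u v : ℝ × ℝ → ℝ} {u' v' : ℝ × ℝ →L[ℝ] ℝ} {z : ℂ}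
    (hu : HasFDerivAt u u' (z.re, z.im)) (hv : HasFDerivAt v v' (z.re, z.im)) :
    dbar (fun z ↦ u (z.re, z.im) + I * v (z.re, z.im)) z =
      (u' (1, 0) - v' (0, 1) : ℝ) + I * (u' (0, 1) + v' (1, 0) : ℝ) := by
  have hz : HasFDerivAt (fun z : ℂ ↦ (z.re, z.im)) (Complex.reCLM.prod Complex.imCLM) z :=
    Complex.reCLM.hasFDerivAt.prodMk Complex.imCLM.hasFDerivAt
  have hf : HasFDerivAt (fun z : ℂ ↦ (u (z.re, z.im) + I * v (z.re, z.im) : ℂ)) _ z :=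
    (Complex.ofRealCLM.hasFDerivAt.comp z (hu.comp z hz)).add
      ((Complex.ofRealCLM.hasFDerivAt.comp z (hv.comp z hz)).const_mul I)
  rw [dbar, hf.fderiv]
  simp only [add_apply, ContinuousLinearMap.comp_apply, ContinuousLinearMap.prod_apply,
    Complex.reCLM_apply, Complex.one_re, Complex.imCLM_apply, Complex.one_im,
    Complex.ofRealCLM_apply, smul_apply, smul_eq_mul, Complex.I_re, Complex.I_im,
    Complex.ofReal_sub, Complex.ofReal_add]
  linear_combination (v' (0, 1) : ℂ) * Complex.I_sq

lemma re_mem_Ioo {z : ℂ} (hz : z ∈ ball 0 R) : z.re ∈ Ioo (-R) R :=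
  abs_lt.1 ((Complex.abs_re_le_norm z).trans_lt (mem_ball_zero_iff.1 hz))

lemma continuousOn_comp_fst {a b : ℝ} (hp : ∀ t ∈ Ioo a b, HasDerivAt p (V t - p t ^ 2) t) :
    ContinuousOn (fun z : ℝ × ℝ ↦ p z.1) (Ioo a b ×ˢ univ) := fun z hz ↦
  ((hp z.1 hz.1).continuousAt.comp continuous_fst.continuousAt).continuousWithinAt

lemma IsNeumannSolution.continuousOn_partials_streamFunction (hφ : IsNeumannSolution V φ)
    {U : Set (ℝ × ℝ)} (hp : ContinuousOn (fun z : ℝ × ℝ ↦ p z.1) U) :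
    ContinuousOn (fun z ↦ -partialY φ z - p z.1 * streamFunction p φ z) U ∧
      ContinuousOn (fun z ↦ partialX φ z - p z.1 * φ z) U := by
  have hφx := hφ.contDiff_partialX.continuous
  exact ⟨hφ.contDiff_partialY.continuous.neg.continuousOn.sub
      (hp.mul (continuousOn_streamFunction hφ.contDiff.continuous hφx hp)),
    hφx.continuousOn.sub (hp.mul hφ.contDiff.continuous.continuousOn)⟩

lemma IsNeumannSolution.hasFDerivAt_streamFunction (hφ : IsNeumannSolution V φ) {a b : ℝ}
    (hp : ∀ t ∈ Ioo a b, HasDerivAt p (V t - p t ^ 2) t) {z : ℝ × ℝ} (hz : z.1 ∈ Ioo a b) :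
    HasFDerivAt (streamFunction p φ)
      ((-partialY φ z - p z.1 * streamFunction p φ z) • ContinuousLinearMap.fst ℝ ℝ ℝ +
        (partialX φ z - p z.1 * φ z) • ContinuousLinearMap.snd ℝ ℝ ℝ) z := by
  have hc := hφ.continuousOn_partials_streamFunction (continuousOn_comp_fst hp)
  exact hasFDerivAt_of_hasDerivAt_prodMk (isOpen_Ioo.prod isOpen_univ)
    (fun u hu ↦ hφ.hasDerivAt_fst_streamFunction (hp u.1 hu.1))
    (fun u _ ↦ hasDerivAt_snd_streamFunction hφ.contDiff.continuous
      hφ.contDiff_partialX.continuous u) hc.1 hc.2 ⟨hz, mem_univ _⟩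

lemma IsNeumannSolution.contDiffOn_streamFunction (hφ : IsNeumannSolution V φ) {a b : ℝ}
    (hp : ∀ t ∈ Ioo a b, HasDerivAt p (V t - p t ^ 2) t) :
    ContDiffOn ℝ 1 (streamFunction p φ) (Ioo a b ×ˢ univ) := by
  have hc := hφ.continuousOn_partials_streamFunction (continuousOn_comp_fst hp)
  exact contDiffOn_one_of_hasDerivAt_prodMk (isOpen_Ioo.prod isOpen_univ)
    (fun u hu ↦ hφ.hasDerivAt_fst_streamFunction (hp u.1 hu.1))
    (fun u _ ↦ hasDerivAt_snd_streamFunction hφ.contDiff.continuous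
      hφ.contDiff_partialX.continuous u) hc.1 hc.2

lemma IsNeumannSolution.contDiffOn_completion (hφ : IsNeumannSolution V φ)
    (hp : ∀ t ∈ Ioo (-R) R, HasDerivAt p (V t - p t ^ 2) t) :
    ContDiffOn ℝ 1 (completion p φ) (ball 0 R) := by
  have hreIm : ContDiff ℝ 1 (fun z : ℂ ↦ (z.re, z.im)) :=
    Complex.reCLM.contDiff.prodMk Complex.imCLM.contDiff
  have hψ : ContDiffOn ℝ 1 (fun z : ℂ ↦ streamFunction p φ (z.re, z.im)) (ball 0 R) :=
    (hφ.contDiffOn_streamFunction hp).comp hreIm.contDiffOn fun z hz ↦ ⟨re_mem_Ioo hz, mem_univ _⟩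
  exact (Complex.ofRealCLM.contDiff.comp
    ((hφ.contDiff.of_le one_le_two).comp hreIm)).contDiffOn.add
    (contDiffOn_const.mul (Complex.ofRealCLM.contDiff.comp_contDiffOn hψ))

lemma IsNeumannSolution.dbar_completion (hφ : IsNeumannSolution V φ)
    (hp : ∀ t ∈ Ioo (-R) R, HasDerivAt p (V t - p t ^ 2) t) {z : ℂ} (hz : z ∈ ball 0 R) :
    dbar (completion p φ) z = p z.re * conj (completion p φ z) := by
  have hφd : Differentiable ℝ φ := hφ.contDiff.differentiable two_ne_zero
  have hderiv := dbar_ofReal_add_I_mul_ofReal (hφd (z.re, z.im)).hasFDerivAt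
    (hφ.hasFDerivAt_streamFunction hp (re_mem_Ioo hz))
  refine hderiv.trans ?_
  rw [← congrFun (partialX_eq_fderiv hφd), ← congrFun (partialY_eq_fderiv hφd)]
  simp only [add_apply, smul_apply, ContinuousLinearMap.coe_fst', smul_eq_mul, mul_zero,
    ContinuousLinearMap.coe_snd', mul_one, zero_add, sub_sub_cancel, Complex.ofReal_mul, add_zero,
    Complex.ofReal_add, Complex.ofReal_sub, Complex.ofReal_neg, completion, map_add,
    Complex.conj_ofReal, map_mul, Complex.conj_I, neg_mul]
  ring

lemma IsNeumannSolution.contDiffOn_dbar_completion (hφ : IsNeumannSolution V φ)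
    (hV : ContinuousOn V (Ioo (-R) R)) (hp : ∀ t ∈ Ioo (-R) R, HasDerivAt p (V t - p t ^ 2) t) :
    ContDiffOn ℝ 1 (dbar (completion p φ)) (ball 0 R) := by
  have hpz : ContDiffOn ℝ 1 (fun z : ℂ ↦ (p z.re : ℂ)) (ball 0 R) :=
    Complex.ofRealCLM.contDiff.comp_contDiffOn ((contDiffOn_one_of_riccati hV hp).comp
      Complex.reCLM.contDiff.contDiffOn fun z hz ↦ re_mem_Ioo hz)
  exact (hpz.mul (Complex.conjCLE.contDiff.comp_contDiffOn
    (hφ.contDiffOn_completion hp))).congr fun z hz ↦ hφ.dbar_completion hp hz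

lemma abs_le_norm_completion (z : ℂ) : |φ (z.re, z.im)| ≤ ‖completion p φ z‖ := by
  simpa [completion] using Complex.abs_re_le_norm (completion p φ z)

lemma norm_completion_le (z : ℂ) :
    ‖completion p φ z‖ ≤ |φ (z.re, z.im)| + |streamFunction p φ (z.re, z.im)| := by
  simpa [completion] using norm_add_le (φ (z.re, z.im) : ℂ) (I * streamFunction p φ (z.re, z.im))

lemma completion_ofReal (x : ℝ) : completion p φ x = φ (x, 0) := by
  simp [completion, streamFunction_zero_right]

end Completion

section CentredEstimate

variable {V p : ℝ → ℝ} {φ : ℝ × ℝ → ℝ} {M B : ℝ}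

lemma IsNeumannSolution.abs_partialX_le (hφ : IsNeumannSolution V φ) (hV : ∀ x, |V x| ≤ M) {r : ℝ}
    (hr : 0 < r) (c : ℝ × ℝ) (hB : ∀ z ∈ Icc (-r) r ×ˢ Icc (-r) r, |φ (z + c)| ≤ B) :
    |partialX φ c| ≤ (2 / r + M * r / 2) * B := by
  have hlap : ∀ z ∈ Icc (-r) r ×ˢ Icc (-r) r, |laplacian φ (z + c)| ≤ M * B := fun z hz ↦ by
    rw [hφ.laplacian_eq, abs_mul]
    exact mul_le_mul (hV _) (hB z hz) (abs_nonneg _) ((abs_nonneg _).trans (hV 0))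
  exact (NeumannPropagation.abs_partialX_le hr hφ.contDiff c hB hlap).trans_eq (by ring)

lemma IsNeumannSolution.norm_completion_le (hφ : IsNeumannSolution V φ) (hV : ∀ x, |V x| ≤ M)
    {P : ℝ} (hp : ∀ t ∈ Icc (-1 : ℝ) 1, |p t| ≤ P)
    (hB : ∀ z ∈ Icc (-(3 / 2) : ℝ) (3 / 2) ×ˢ Icc (-(3 / 2) : ℝ) (3 / 2), |φ z| ≤ B) {z : ℂ}
    (hz : ‖z‖ ≤ 1) : ‖completion p φ z‖ ≤ (5 + M / 4 + P) * B := by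
  have hx : |z.re| ≤ 1 := (Complex.abs_re_le_norm z).trans hz
  have hy : |z.im| ≤ 1 := (Complex.abs_im_le_norm z).trans hz
  have hφt (t : ℝ) (ht : |t| ≤ 1) : |φ (z.re, t)| ≤ B := by
    rw [abs_le] at hx ht
    exact hB _ ⟨⟨by linarith, by linarith⟩, ⟨by linarith, by linarith⟩⟩
  have hφx (t : ℝ) (ht : |t| ≤ 1) : |partialX φ (z.re, t)| ≤ (4 + M / 4) * B := by
    rw [abs_le] at hx ht
    refine (hφ.abs_partialX_le (B := B) hV one_half_pos (z.re, t) ?_).trans_eq (by ring)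
    rintro ⟨a, b⟩ ⟨⟨ha₁, ha₂⟩, hb₁, hb₂⟩
    exact hB (a + z.re, b + t) ⟨⟨by linarith, by linarith⟩, by linarith, by linarith⟩
  have hP : |p z.re| ≤ P := hp _ (abs_le.1 hx)
  have hB0 : 0 ≤ B := (abs_nonneg _).trans (hφt 0 (by simp))
  have hM0 : 0 ≤ M := (abs_nonneg _).trans (hV 0)
  have hP0 : 0 ≤ P := (abs_nonneg _).trans hP
  have hψ : |streamFunction p φ (z.re, z.im)| ≤ (4 + M / 4) * B + P * B :=
    (abs_streamFunction_le hP (fun t ht ↦ hφt t (ht.trans hy))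
      fun t ht ↦ hφx t (ht.trans hy)).trans (mul_le_of_le_one_right (by positivity) hy)
  linarith [NeumannPropagation.norm_completion_le (p := p) (φ := φ) z, hφt z.im hy]

lemma IsNeumannSolution.exists_completion (hφ : IsNeumannSolution V φ) (hVc : Continuous V)
    (hV0 : ∀ x, 0 ≤ V x) (hVM : ∀ x, V x ≤ M)
    (hB : ∀ z ∈ Icc (-(3 / 2) : ℝ) (3 / 2) ×ˢ Icc (-(3 / 2) : ℝ) (3 / 2), |φ z| ≤ B) :
    ∃ p : ℝ → ℝ, ContDiffOn ℝ 1 (completion p φ) (ball 0 (3 / 2)) ∧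
      ContDiffOn ℝ 1 (dbar (completion p φ)) (ball 0 (3 / 2)) ∧
      (∀ w ∈ ball (0 : ℂ) (3 / 2),
        ‖dbar (completion p φ) w‖ ≤ (M + 1) * ‖completion p φ w‖) ∧
      ∀ w : ℂ, ‖w‖ ≤ 1 → ‖completion p φ w‖ ≤ (6 + 5 / 4 * M) * B := by
  have hV (x : ℝ) : |V x| ≤ M := (abs_of_nonneg (hV0 x)).trans_le (hVM x)
  obtain ⟨p, hp⟩ := exists_hasDerivAt_riccati (a := -(3 / 2)) (b := 3 / 2) hVc.continuousOn
    (by norm_num) (fun t _ ↦ hV0 t) fun t _ ↦ hVM t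
  have hp' (t : ℝ) (ht : t ∈ Ioo (-(3 / 2)) (3 / 2)) := (hp t ht).1
  have hpM (t : ℝ) (ht : t ∈ Ioo (-(3 / 2)) (3 / 2)) : |p t| ≤ M + 1 :=
    (abs_of_nonneg (hp t ht).2.1).trans_le (hp t ht).2.2
  refine ⟨p, hφ.contDiffOn_completion hp', hφ.contDiffOn_dbar_completion hVc.continuousOn hp',
    fun w hw ↦ ?_, fun w hw ↦ ?_⟩
  · rw [hφ.dbar_completion hp' hw, norm_mul, Complex.norm_conj, Complex.norm_real]
    exact mul_le_mul_of_nonneg_right (hpM _ (re_mem_Ioo hw)) (norm_nonneg _)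
  · exact (hφ.norm_completion_le hV (fun t ht ↦ hpM t ⟨by linarith [ht.1], by linarith [ht.2]⟩)
      hB hw).trans_eq (by ring)

theorem IsNeumannSolution.abs_le_pow_add_pow (hφ : IsNeumannSolution V φ) (hVc : Continuous V)
    (hV0 : ∀ x, 0 ≤ V x) (hVM : ∀ x, V x ≤ M) {ω : Set ℝ} (hω : ω ⊆ Icc (-(1 / 2)) (1 / 2))
    {m : ℝ} (hm : 0 < m) (hvol : ENNReal.ofReal m ≤ volume ω) {δ : ℝ} (hδ0 : 0 ≤ δ)
    (hδ : ∀ x ∈ ω, |φ (x, 0)| ≤ δ)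
    (hB : ∀ z ∈ Icc (-(3 / 2) : ℝ) (3 / 2) ×ˢ Icc (-(3 / 2) : ℝ) (3 / 2), |φ z| ≤ B)
    {z : ℝ × ℝ} (hz : z ∈ Icc (-(1 / 2) : ℝ) (1 / 2) ×ˢ Icc (-(1 / 2) : ℝ) (1 / 2)) (n : ℕ) :
    |φ z| ≤ Real.exp (3 * (M + 1)) ^ 2 * (6 + 5 / 4 * M) *
      ((4 * Real.exp 1 / m) ^ n * δ + (10 / 11) ^ n * B) := by
  have hM : 0 ≤ M := (hV0 0).trans (hVM 0)
  obtain ⟨p, hf, hdf, hdbar, hfB⟩ := hφ.exists_completion hVc hV0 hVM hB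
  have hzn : ‖(⟨z.1, z.2⟩ : ℂ)‖ ≤ 3 / 4 := by
    obtain ⟨hx, hy⟩ := hz
    rw [Complex.norm_eq_sqrt_sq_add_sq, Real.sqrt_le_iff]
    constructor <;> linarith [sq_le_sq' hx.1 hx.2, sq_le_sq' hy.1 hy.2]
  have hfz := norm_le_of_norm_dbar_le (δ := δ) (by linarith) (by norm_num) hf hdf hdbar
    (by norm_num) (by norm_num) hω hm hvol
    (fun x hx ↦ by simpa [completion_ofReal] using hδ x hx) (fun w hw ↦ hfB w hw.le) hzn n
  refine (abs_le_norm_completion (p := p) (φ := φ) ⟨z.1, z.2⟩).trans (hfz.trans ?_)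
  have he : 2 * Real.exp 1 ≤ 6 + 5 / 4 * M := by linarith [Real.exp_one_lt_d9]
  calc Real.exp (2 * (3 / 2) * (M + 1)) ^ 2 * (2 * Real.exp 1 * (4 * Real.exp 1 / m) ^ n * δ +
        ((1 / 2 + 3 / 4) / (1 + 1 / 2 * (3 / 4))) ^ n * ((6 + 5 / 4 * M) * B))
      = Real.exp (3 * (M + 1)) ^ 2 * (2 * Real.exp 1 * ((4 * Real.exp 1 / m) ^ n * δ) +
        (6 + 5 / 4 * M) * ((10 / 11) ^ n * B)) := by
        norm_num only
        ring
    _ ≤ Real.exp (3 * (M + 1)) ^ 2 * ((6 + 5 / 4 * M) * ((4 * Real.exp 1 / m) ^ n * δ) +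
        (6 + 5 / 4 * M) * ((10 / 11) ^ n * B)) := by gcongr
    _ = _ := by ring

end CentredEstimate

/-! ### Propagation of smallness for solutions -/

section Optimisation

lemma exists_pow_mul_add_pow_le_rpow {A q : ℝ} (hA : 0 < A) (hq0 : 0 < q) (hq1 : q < 1) :
    ∃ α ∈ Ioo (0 : ℝ) 1, ∀ t ∈ Ioc (0 : ℝ) 1, ∃ n : ℕ, A ^ n * t + q ^ n ≤ 2 / q * t ^ α := by
  set D := (A + 1) / q with hD
  have hq1' : 1 < 1 / q := one_lt_one_div hq0 hq1
  have hqD : 1 / q < D := by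
    rw [hD]
    gcongr
    linarith
  have hD1 : 1 < D := hq1'.trans hqD
  have hD0 : 0 < D := one_pos.trans hD1
  have hα : Real.logb D (1 / q) ∈ Ioo (0 : ℝ) 1 :=
    ⟨Real.logb_pos hD1 hq1', by rw [Real.logb_lt_iff_lt_rpow hD1 (by positivity)]; simpa using hqD⟩
  refine ⟨_, hα, fun t ht ↦ ?_⟩
  have ht0 := ht.1
  obtain ⟨n, hn, hn'⟩ := exists_nat_pow_near (one_le_one_div ht.1 ht.2) hD1
  have hDα : D ^ Real.logb D (1 / q) = 1 / q := Real.rpow_logb hD0 hD1.ne' (by positivity)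
  refine ⟨n, ?_⟩
  have hAt : A ^ n * t ≤ q ^ n := by
    rw [hD, div_pow, div_le_div_iff₀ (by positivity) ht0] at hn
    have : A ^ n ≤ (A + 1) ^ n := pow_le_pow_left₀ hA.le (by linarith) n
    nlinarith
  have hqt : q ^ (n + 1) ≤ t ^ Real.logb D (1 / q) := by
    have h := Real.rpow_le_rpow (by positivity) hn'.le hα.1.le
    rw [← Real.rpow_natCast, ← Real.rpow_mul hD0.le, mul_comm, Real.rpow_mul hD0.le, hDα,
      Real.rpow_natCast, Real.div_rpow one_pos.le ht0.le, Real.one_rpow, div_pow, one_pow] at h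
    exact (one_div_le_one_div (by positivity) (by positivity)).1 h
  have hqn : q ^ n ≤ t ^ Real.logb D (1 / q) / q := (le_div_iff₀ hq0).2 hqt
  calc A ^ n * t + q ^ n ≤ 2 * q ^ n := by linarith
    _ ≤ 2 * (t ^ Real.logb D (1 / q) / q) := by gcongr
    _ = _ := by ring

lemma exists_le_rpow_mul_rpow {A q : ℝ} (hA : 0 < A) (hq0 : 0 < q) (hq1 : q < 1) :
    ∃ α ∈ Ioo (0 : ℝ) 1, ∀ X δ B : ℝ, 0 ≤ δ → δ ≤ B → (∀ n : ℕ, X ≤ A ^ n * δ + q ^ n * B) →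
      X ≤ 2 / q * δ ^ α * B ^ (1 - α) := by
  obtain ⟨α, hα, h⟩ := exists_pow_mul_add_pow_le_rpow hA hq0 hq1
  refine ⟨α, hα, fun X δ B hδ hδB hX ↦ ?_⟩
  rcases hδ.eq_or_lt with rfl | hδ0
  · have hlim : Filter.Tendsto (fun n : ℕ ↦ A ^ n * 0 + q ^ n * B) Filter.atTop (nhds 0) := by
      simpa using (tendsto_pow_atTop_nhds_zero_of_lt_one hq0.le hq1).mul_const B
    rw [Real.zero_rpow hα.1.ne', mul_zero, zero_mul]
    exact ge_of_tendsto' hlim hX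
  · have hB : 0 < B := hδ0.trans_le hδB
    obtain ⟨n, hn⟩ := h (δ / B) ⟨by positivity, (div_le_one hB).2 hδB⟩
    calc X ≤ A ^ n * δ + q ^ n * B := hX n
      _ = (A ^ n * (δ / B) + q ^ n) * B := by field_simp
      _ ≤ 2 / q * (δ / B) ^ α * B := by gcongr
      _ = 2 / q * δ ^ α * B ^ (1 - α) := by
        rw [Real.div_rpow hδ hB.le, Real.rpow_sub hB, Real.rpow_one]
        field_simp

end Optimisation

section BiSup

variable {T : Type*} {S : Set T} {g : T → ℝ} {K : ℝ}

lemma biSup_le_of_nonneg (hK : 0 ≤ K) (h : ∀ z ∈ S, g z ≤ K) : ⨆ z ∈ S, g z ≤ K :=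
  Real.iSup_le (fun z ↦ Real.iSup_le (h z) hK) hK

lemma le_biSup_of_forall_le (h : ∀ z ∈ S, g z ≤ K) {z : T} (hz : z ∈ S) : g z ≤ ⨆ z ∈ S, g z :=
  le_ciSup₂ (f := fun z (_ : z ∈ S) ↦ g z)
    ⟨K, by rintro _ ⟨_, ⟨z, rfl⟩, hz, rfl⟩; exact h z hz⟩ z hz

lemma biSup_abs_nonneg : 0 ≤ ⨆ z ∈ S, |g z| :=
  Real.iSup_nonneg fun _ ↦ Real.iSup_nonneg fun _ ↦ abs_nonneg _

lemma abs_le_biSup_abs_of_isCompact [TopologicalSpace T] (hS : IsCompact S)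
    (hg : ContinuousOn g S) {z : T} (hz : z ∈ S) : |g z| ≤ ⨆ z ∈ S, |g z| := by
  obtain ⟨K, hK⟩ := hS.exists_bound_of_continuousOn hg
  exact le_biSup_of_forall_le hK hz

end BiSup

theorem IsNeumannSolution.abs_le_pow_add_pow_of_subset_Icc {V : ℝ → ℝ} {φ : ℝ × ℝ → ℝ}
    {M m δ B ℓ : ℝ} (hφ : IsNeumannSolution V φ) (hVc : Continuous V) (hV0 : ∀ x, 0 ≤ V x)
    (hVM : ∀ x, V x ≤ M) {ω : Set ℝ} (hω : ω ⊆ Icc ℓ (ℓ + 1)) (hm : 0 < m)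
    (hvol : ENNReal.ofReal m ≤ volume ω) (hδ0 : 0 ≤ δ) (hδ : ∀ x ∈ ω, |φ (x, 0)| ≤ δ)
    (hB : ∀ z ∈ Icc (ℓ - 1) (ℓ + 2) ×ˢ Icc (-(3 / 2) : ℝ) (3 / 2), |φ z| ≤ B)
    {z : ℝ × ℝ} (hz : z ∈ Icc ℓ (ℓ + 1) ×ˢ Icc (-(1 / 2) : ℝ) (1 / 2)) (n : ℕ) :
    |φ z| ≤ Real.exp (3 * (M + 1)) ^ 2 * (6 + 5 / 4 * M) *
      ((4 * Real.exp 1 / m) ^ n * δ + (10 / 11) ^ n * B) := by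
  set c := ℓ + 1 / 2 with hc
  have hωc : (· + c) ⁻¹' ω ⊆ Icc (-(1 / 2)) (1 / 2) := fun x hx ↦ by
    obtain ⟨h₁, h₂⟩ := hω hx
    constructor <;> linarith
  have hBc : ∀ w ∈ Icc (-(3 / 2) : ℝ) (3 / 2) ×ˢ Icc (-(3 / 2) : ℝ) (3 / 2),
      |φ (w + (c, 0))| ≤ B := by
    rintro ⟨x, y⟩ ⟨⟨hx₁, hx₂⟩, hy⟩
    exact hB (x + c, y + 0) ⟨⟨by linarith, by linarith⟩, by simpa using hy⟩
  have hzc : z - (c, 0) ∈ Icc (-(1 / 2) : ℝ) (1 / 2) ×ˢ Icc (-(1 / 2) : ℝ) (1 / 2) := by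
    rcases z with ⟨x, y⟩
    obtain ⟨⟨hx₁, hx₂⟩, hy⟩ := hz
    refine ⟨?_, by simpa using hy⟩
    simp only [Prod.mk_sub_mk, mem_Icc]
    constructor <;> linarith
  simpa only [sub_add_cancel] using (hφ.comp_add_right c).abs_le_pow_add_pow (by fun_prop)
    (fun x ↦ hV0 _) (fun x ↦ hVM _) hωc hm (by rwa [measure_preimage_add_right]) hδ0
    (fun x hx ↦ by simpa using hδ _ hx) hBc hzc n

end NeumannPropagation

open NeumannPropagation in
theorem linfty_propagation_neumann_general {M m : ℝ} (hM : 0 ≤ M) (hm : 0 < m) :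
    ∃ α ∈ Ioo (0 : ℝ) 1, ∃ C > 0, ∀ V : ℝ → ℝ, Continuous V → (∀ x, 0 ≤ V x) → (∀ x, V x ≤ M) →
      ∀ ℓ : ℝ, ∀ ω ⊆ Icc ℓ (ℓ + 1), ENNReal.ofReal m ≤ volume ω →
      ∀ φ : ℝ × ℝ → ℝ, IsNeumannSolution V φ →
        (⨆ z ∈ Icc ℓ (ℓ + 1) ×ˢ Icc (-(1 / 2) : ℝ) (1 / 2), |φ z|) ≤
          C * (⨆ x ∈ ω, |φ (x, 0)|) ^ α *
            (⨆ z ∈ Icc (ℓ - 1) (ℓ + 2) ×ˢ Icc (-(3 / 2) : ℝ) (3 / 2), |φ z|) ^ (1 - α) := by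
  obtain ⟨α, hα, hopt⟩ := exists_le_rpow_mul_rpow (A := 4 * Real.exp 1 / m) (q := 10 / 11)
    (by positivity) (by norm_num) (by norm_num)
  set K := Real.exp (3 * (M + 1)) ^ 2 * (6 + 5 / 4 * M)
  have hK : 0 < K := by positivity
  refine ⟨α, hα, K * (2 / (10 / 11)), by positivity, fun V hVc hV0 hVM ℓ ω hω hvol φ hφ ↦ ?_⟩
  set δ := ⨆ x ∈ ω, |φ (x, 0)|
  set B := ⨆ z ∈ Icc (ℓ - 1) (ℓ + 2) ×ˢ Icc (-(3 / 2) : ℝ) (3 / 2), |φ z|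
  have hφB : ∀ z ∈ Icc (ℓ - 1) (ℓ + 2) ×ˢ Icc (-(3 / 2) : ℝ) (3 / 2), |φ z| ≤ B := fun z hz ↦
    abs_le_biSup_abs_of_isCompact (isCompact_Icc.prod isCompact_Icc)
      hφ.contDiff.continuous.continuousOn hz
  have hωB (x : ℝ) (hx : x ∈ ω) : |φ (x, 0)| ≤ B :=
    hφB _ ⟨⟨by linarith [(hω hx).1], by linarith [(hω hx).2]⟩, by norm_num, by norm_num⟩
  have hB0 : 0 ≤ B := biSup_abs_nonneg
  have hδ0 : 0 ≤ δ := biSup_abs_nonneg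
  refine biSup_le_of_nonneg (by positivity) fun z hz ↦ ?_
  have hz' : |φ z| / K ≤ 2 / (10 / 11) * δ ^ α * B ^ (1 - α) :=
    hopt _ δ B hδ0 (biSup_le_of_nonneg hB0 hωB) fun n ↦ (div_le_iff₀' hK).2 <|
      hφ.abs_le_pow_add_pow_of_subset_Icc hVc hV0 hVM hω hm hvol hδ0
        (fun x hx ↦ le_biSup_of_forall_le hωB hx) hφB hz n
  calc |φ z| ≤ K * (2 / (10 / 11) * δ ^ α * B ^ (1 - α)) := (div_le_iff₀' hK).1 hz'
    _ = _ := by ring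

/-- **L^∞ propagation of smallness for `-Δφ + V(x)φ = 0` with Neumann condition on `{y = 0}`.**
For `V` continuous, bounded, with `V ≥ 1`, and `ω ⊆ [ℓ, ℓ+1]` measurable with `|ω| = m > 0`,
there are `α ∈ (0,1)` and `C > 0`, depending only on `V` and `m`, such that every real-valued
`H²_loc` solution `φ` of `-Δφ + V(x)φ = 0` on `ℝ²` with `∂_y φ(x,0) = 0` satisfies
`sup_{D₁ℓ}|φ| ≤ C (sup_{ω×{0}} |φ|)^α (sup_{D₂ℓ}|φ|)^{1-α}`,
where `D₁ℓ = [ℓ,ℓ+1] × [-1/2,1/2]` and `D₂ℓ = [ℓ-1,ℓ+2] × [-3/2,3/2]`. -/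
theorem linfty_propagation_neumann
    (V : ℝ → ℝ) (hVcont : Continuous V) (hVbdd : ∃ M : ℝ, ∀ x : ℝ, |V x| ≤ M)
    (hV1 : ∀ x : ℝ, 1 ≤ V x) (m : ℝ) (hm : 0 < m) :
    ∃ α : ℝ, α ∈ Ioo (0 : ℝ) 1 ∧ ∃ C > 0,
      ∀ ℓ : ℤ, ∀ ω : Set ℝ, MeasurableSet ω → ω ⊆ Icc (ℓ : ℝ) ((ℓ : ℝ) + 1) →
        volume ω = ENNReal.ofReal m →
      ∀ φ : ℝ × ℝ → ℝ, ContDiff ℝ 2 φ →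
        (∀ x y : ℝ,
          -(deriv (deriv (fun s => φ (s, y))) x + deriv (deriv (fun s => φ (x, s))) y)
            + V x * φ (x, y) = 0) →
        (∀ x : ℝ, deriv (fun s => φ (x, s)) 0 = 0) →
        (⨆ z ∈ (Icc (ℓ : ℝ) ((ℓ : ℝ) + 1) ×ˢ Icc (-(1/2) : ℝ) (1/2)), |φ z|) ≤
          C * (⨆ x ∈ ω, |φ (x, 0)|) ^ α *
            (⨆ z ∈ (Icc ((ℓ : ℝ) - 1) ((ℓ : ℝ) + 2) ×ˢ Icc (-(3/2) : ℝ) (3/2)), |φ z|)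
              ^ (1 - α) := by
  obtain ⟨M, hM⟩ := hVbdd
  have hV0 (x : ℝ) : 0 ≤ V x := zero_le_one.trans (hV1 x)
  have hVM (x : ℝ) : V x ≤ M := (le_abs_self _).trans (hM x)
  obtain ⟨α, hα, C, hC, h⟩ := linfty_propagation_neumann_general ((hV0 0).trans (hVM 0)) hm
  exact ⟨α, hα, C, hC, fun ℓ ω _ hω hvol φ hφ heq hneu ↦
    h V hVcont hV0 hVM ℓ ω hω hvol.ge φ ⟨hφ, fun z ↦ neg_add_eq_zero.1 (heq z.1 z.2), hneu⟩⟩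
end
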